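/- Let K be any field, let F be a totally looped finite graph, let E = F^+(n_1, ..., n_t) be a hair extension of F, and let Q be a nonzero finitely generated projective left L_K(E)-module. Then there exist a hereditary subset T of F^0 and a hair extension G of the restriction graph F_T such that End_{L_K(E)}(Q) ≅ L_K(G) as K-algebras. Moreover, if Q is in addition a generator for the category of left L_K(E)-modules, then End_{L_K(E)}(Q) ≅ L_K(G) where G is a hair extension of F itself. -/

import Mathlib

/-!
# Endomorphism rings over Leavitt path algebras of hair extensions

Write `L = L_K(E)`. The argument rests on three facts.

* `exists_equiv_stdMod`: over any finite graph, a finitely generated projective left `L`-module is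
  isomorphic to a *standard module* `⨁ᵢ L w(i)`, with `w` a finite family of vertices. Such a module
  is a finitely generated submodule of a free module. By the Cuntz-Krieger relation, multiplying a
  generating family by sinks and ghost edges does not change its span, so the entries may be assumed
  to be combinations of ghost paths. Ghost paths behave like the words of a free algebra: if the
  generators satisfy a nontrivial relation, the leading homogeneous part of the relation can be
  shortened until the coefficient of a generator of maximal degree is a scalar, and that generator
  can be replaced by one of smaller degree (`exists_reduction`). When no nontrivial relation is left,
  the span is standard.

* `end_hair`: if a graph `H` is a hair extension of a full subgraph of `E`, then the endomorphism
  ring of `⨁ L root(u)`, with one summand for each vertex `u` of `H`, is `L_K(H)`. The isomorphism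
  comes from the universal property; since endomorphisms compose in the order opposite to
  multiplication in `L`, it exchanges edges and ghost edges. Injectivity uses the grading by path
  length, shifted by the heights of the vertices on the hairs, and the fact that every nonzero
  element can be multiplied on the left to a nonzero combination of ghost paths.

* `exists_hereditary`: when `E` is a hair extension of a totally looped graph `F`, the summands of a
  standard module may be taken at vertices of `F`, since the vertices along a hair are equivalent
  idempotents. If `v` emits a loop `l`, then `L v ≅ L v ⊕ ⨁ L r(h)` with `h` running through the
  other edges emitted by `v`, so the set `T` of vertices involved may be assumed hereditary.

If a vertex `v ∈ T` occurs `m(v)` times, the module is the one attached to the hair extension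
`F_T⁺(m)` of `F_T`, so its endomorphism ring is `L_K(F_T⁺(m))`. If the module is a generator, then
`T` is all of `F^0` (`generator_surjective`): a hereditary set of vertices of a totally looped graph
is saturated, so `L` has a representation in which exactly the vertices on the hairs rooted in `T`
act as zero, and it annihilates the image of every homomorphism from the module to `L`.
-/

/-! ## Finite directed graphs -/

structure FinGraph where
  V : Type
  E : Type
  [fintypeV : Fintype V]
  [fintypeE : Fintype E]
  [decEqV : DecidableEq V]
  [decEqE : DecidableEq E]
  s : E → V
  r : E → V

attribute [instance] FinGraph.fintypeV FinGraph.fintypeE FinGraph.decEqV FinGraph.decEqE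

namespace FinGraph

/-- A vertex is regular if it emits at least one edge. -/
def IsRegular (G : FinGraph) (v : G.V) : Prop := ∃ e : G.E, G.s e = v

/-- A sink emits no edges. -/
def IsSink (G : FinGraph) (v : G.V) : Prop := ∀ e : G.E, G.s e ≠ v

/-- A source receives no edges. -/
def IsSource (G : FinGraph) (v : G.V) : Prop := ∀ e : G.E, G.r e ≠ v

/-- A graph is totally looped if every regular vertex is the base of a loop. -/
def TotallyLooped (G : FinGraph) : Prop :=
  ∀ v : G.V, G.IsRegular v → ∃ e : G.E, G.s e = v ∧ G.r e = v

/-- A set of vertices is hereditary if it is closed under ranges of edges emitted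
from its elements (equivalently, under reachability by paths). -/
def Hereditary (G : FinGraph) (T : Finset G.V) : Prop :=
  ∀ e : G.E, G.s e ∈ T → G.r e ∈ T

/-- A set of vertices `H` is saturated if every regular vertex all of whose emitted
edges end in `H` belongs to `H`. -/
def Saturated (G : FinGraph) (H : Set G.V) : Prop :=
  ∀ v : G.V, G.IsRegular v → (∀ e : G.E, G.s e = v → G.r e ∈ H) → v ∈ H

/-- The trivial graph: one vertex, no edges. -/
def IsTrivial (G : FinGraph) : Prop :=
  Nonempty G.V ∧ Subsingleton G.V ∧ IsEmpty G.E

/-- A graph is source-free if every vertex receives at least one edge. -/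
def IsSourceFree (G : FinGraph) : Prop := ∀ v : G.V, ∃ e : G.E, G.r e = v

/-- The graph with `k` vertices and no edges. -/
def discrete (k : ℕ) : FinGraph where
  V := Fin k
  E := Empty
  s := Empty.elim
  r := Empty.elim

/-- The straight line graph `A_n` with `n` vertices `v_0, …, v_{n-1}` and
edges `v_{i+1} → v_i` for `0 ≤ i ≤ n-2`. -/
def line (n : ℕ) : FinGraph where
  V := Fin n
  E := Fin (n - 1)
  s := fun i => ⟨i.1 + 1, by have := i.isLt; omega⟩
  r := fun i => ⟨i.1, by have := i.isLt; omega⟩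

/-- Disjoint union of two graphs. -/
def disjUnion (G H : FinGraph) : FinGraph where
  V := G.V ⊕ H.V
  E := G.E ⊕ H.E
  s := Sum.map G.s H.s
  r := Sum.map G.r H.r

/-- The restriction graph of `G` to a hereditary set `T` of vertices. -/
def restrict (G : FinGraph) (T : Finset G.V) (hT : G.Hereditary T) : FinGraph where
  V := {v : G.V // v ∈ T}
  E := {e : G.E // G.s e ∈ T}
  s := fun e => ⟨G.s e.1, e.2⟩
  r := fun e => ⟨G.r e.1, hT e.1 e.2⟩

/-- The "strands of hair" extension `F⁺(n)` of `F`:  at each vertex `v` a strand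
`v^{n v - 1} → ⋯ → v^1 → v` of length `n v - 1` is attached. -/
def hairExtension (F : FinGraph) (n : F.V → ℕ) : FinGraph where
  V := F.V ⊕ (Σ v : F.V, Fin (n v - 1))
  E := F.E ⊕ (Σ v : F.V, Fin (n v - 1))
  s := Sum.elim (fun e => Sum.inl (F.s e)) (fun p => Sum.inr p)
  r := Sum.elim (fun e => Sum.inl (F.r e))
    (fun p => if h : (p.2 : ℕ) = 0 then Sum.inl p.1
      else Sum.inr ⟨p.1, ⟨(p.2 : ℕ) - 1, by have := p.2.isLt; omega⟩⟩)

/-- The "Move (R)" graph at a vertex `w` which emits precisely one edge `f`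
which is not a loop: `w` is removed, and each edge `e` into `w` is replaced by
an edge `[ef]` from `s e` to `r f`. -/
def moveR (E : FinGraph) (w : E.V) (f : E.E)
    (hsf : E.s f = w) (huniq : ∀ e : E.E, E.s e = w → e = f) (hnl : E.r f ≠ w) : FinGraph where
  V := {v : E.V // v ≠ w}
  E := {e : E.E // E.r e ≠ w ∧ e ≠ f} ⊕ {e : E.E // E.r e = w}
  s := Sum.elim
    (fun e => ⟨E.s e.1, fun h => e.2.2 (huniq e.1 h)⟩)
    (fun e => ⟨E.s e.1, fun h => hnl ((huniq e.1 h) ▸ e.2)⟩)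
  r := Sum.elim
    (fun e => ⟨E.r e.1, e.2.1⟩)
    (fun _ => ⟨E.r f, hnl⟩)

/-- The collapse of `E` at a vertex `v` which is not the base of a loop:
`v` is removed, and for every `e ∈ r⁻¹(v)` and `f ∈ s⁻¹(v)` an edge `[ef]`
from `s e` to `r f` is added. -/
def collapse (E : FinGraph) (v : E.V)
    (hnl : ∀ e : E.E, E.s e = v → E.r e ≠ v) : FinGraph where
  V := {u : E.V // u ≠ v}
  E := {e : E.E // E.r e ≠ v ∧ E.s e ≠ v} ⊕ ({e : E.E // E.r e = v} × {f : E.E // E.s f = v})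
  s := Sum.elim
    (fun e => ⟨E.s e.1, e.2.2⟩)
    (fun p => ⟨E.s p.1.1, fun h => (hnl p.1.1 h) p.1.2⟩)
  r := Sum.elim
    (fun e => ⟨E.r e.1, e.2.1⟩)
    (fun p => ⟨E.r p.2.1, hnl p.2.1 p.2.2⟩)

/-- The in-split graph of `E` at a vertex `v`, with respect to a partition of
`r⁻¹(v)` into `n` classes (encoded as a surjection `P : r⁻¹(v) → Fin n`). -/
def inSplit (E : FinGraph) (v : E.V) (n : ℕ) (P : {e : E.E // E.r e = v} → Fin n) : FinGraph where
  V := {u : E.V // u ≠ v} ⊕ Fin n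
  E := ({e : E.E // E.s e = v} × Fin n) ⊕ {f : E.E // E.s f ≠ v}
  s := Sum.elim (fun x => Sum.inr x.2) (fun f => Sum.inl ⟨E.s f.1, f.2⟩)
  r := Sum.elim
    (fun x => if h : E.r x.1.1 = v then Sum.inr (P ⟨x.1.1, h⟩) else Sum.inl ⟨E.r x.1.1, h⟩)
    (fun f => if h : E.r f.1 = v then Sum.inr (P ⟨f.1, h⟩) else Sum.inl ⟨E.r f.1, h⟩)

/-- The out-split graph of `E` at a vertex `v`, with respect to a partition of
`s⁻¹(v)` into `n` classes (encoded as a surjection `P : s⁻¹(v) → Fin n`). -/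
def outSplit (E : FinGraph) (v : E.V) (n : ℕ) (P : {e : E.E // E.s e = v} → Fin n) : FinGraph where
  V := {u : E.V // u ≠ v} ⊕ Fin n
  E := ({e : E.E // E.r e = v} × Fin n) ⊕ {f : E.E // E.r f ≠ v}
  r := Sum.elim (fun x => Sum.inr x.2) (fun f => Sum.inl ⟨E.r f.1, f.2⟩)
  s := Sum.elim
    (fun x => if h : E.s x.1.1 = v then Sum.inr (P ⟨x.1.1, h⟩) else Sum.inl ⟨E.s x.1.1, h⟩)
    (fun f => if h : E.s f.1 = v then Sum.inr (P ⟨f.1, h⟩) else Sum.inl ⟨E.s f.1, h⟩)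

/-- The source elimination graph `E \ v` at a source `v`. -/
def sourceElim (E : FinGraph) (v : E.V) (hsrc : E.IsSource v) : FinGraph where
  V := {u : E.V // u ≠ v}
  E := {e : E.E // E.s e ≠ v}
  s := fun e => ⟨E.s e.1, e.2⟩
  r := fun e => ⟨E.r e.1, fun h => hsrc e.1 h⟩

/-- A chain of source eliminations starting at `E`. -/
inductive ElimChain (E : FinGraph) : FinGraph → Type 1
  | refl : ElimChain E E
  | step {H : FinGraph} (c : ElimChain E H) (v : H.V) (hsrc : H.IsSource v) :
      ElimChain E (H.sourceElim v hsrc)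

/-- The canonical (injective) map from the vertices of the final graph of a
source elimination chain back into the vertices of the initial graph. -/
def ElimChain.vmap {E : FinGraph} : {F : FinGraph} → ElimChain E F → F.V → E.V
  | _, .refl, u => u
  | _, .step c _ _, u => c.vmap u.1

/-- A chain of collapses, each performed at a regular vertex which is not the
base of a loop. -/
inductive CollapseChain (E : FinGraph) : FinGraph → Prop
  | refl : CollapseChain E E
  | step {H : FinGraph} (c : CollapseChain E H) (v : H.V) (hreg : H.IsRegular v)
      (hnl : ∀ e : H.E, H.s e = v → H.r e ≠ v) :
      CollapseChain E (H.collapse v hnl)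

end FinGraph

/-! ## Leavitt path algebras -/

/-- Generators of the Leavitt path algebra: vertices, edges, and ghost edges. -/
inductive LPAGen (G : FinGraph) : Type
  | vert : G.V → LPAGen G
  | edge : G.E → LPAGen G
  | ghost : G.E → LPAGen G

/-- The defining relations of the Leavitt path algebra of a finite graph. -/
inductive LeavittRel (K : Type) [Field K] (G : FinGraph) :
    FreeAlgebra K (LPAGen G) → FreeAlgebra K (LPAGen G) → Prop
  | vertMul (v w : G.V) :
      LeavittRel K G (FreeAlgebra.ι K (LPAGen.vert v) * FreeAlgebra.ι K (LPAGen.vert w))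
        (if v = w then FreeAlgebra.ι K (LPAGen.vert v) else 0)
  | edgeLeft (e : G.E) :
      LeavittRel K G (FreeAlgebra.ι K (LPAGen.vert (G.s e)) * FreeAlgebra.ι K (LPAGen.edge e))
        (FreeAlgebra.ι K (LPAGen.edge e))
  | edgeRight (e : G.E) :
      LeavittRel K G (FreeAlgebra.ι K (LPAGen.edge e) * FreeAlgebra.ι K (LPAGen.vert (G.r e)))
        (FreeAlgebra.ι K (LPAGen.edge e))
  | ghostLeft (e : G.E) :
      LeavittRel K G (FreeAlgebra.ι K (LPAGen.vert (G.r e)) * FreeAlgebra.ι K (LPAGen.ghost e))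
        (FreeAlgebra.ι K (LPAGen.ghost e))
  | ghostRight (e : G.E) :
      LeavittRel K G (FreeAlgebra.ι K (LPAGen.ghost e) * FreeAlgebra.ι K (LPAGen.vert (G.s e)))
        (FreeAlgebra.ι K (LPAGen.ghost e))
  | ghostEdge (e f : G.E) :
      LeavittRel K G (FreeAlgebra.ι K (LPAGen.ghost e) * FreeAlgebra.ι K (LPAGen.edge f))
        (if e = f then FreeAlgebra.ι K (LPAGen.vert (G.r e)) else 0)
  | cuntzKrieger (v : G.V) (hv : G.IsRegular v) :
      LeavittRel K G (FreeAlgebra.ι K (LPAGen.vert v))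
        (∑ e ∈ Finset.univ.filter (fun e : G.E => G.s e = v),
          FreeAlgebra.ι K (LPAGen.edge e) * FreeAlgebra.ι K (LPAGen.ghost e))
  | unit :
      LeavittRel K G 1 (∑ v : G.V, FreeAlgebra.ι K (LPAGen.vert v))

/-- The Leavitt path algebra `L_K(G)` of a finite graph `G` with coefficients in
a field `K`. -/
abbrev LeavittPathAlgebra (K : Type) [Field K] (G : FinGraph) : Type :=
  RingQuot (LeavittRel K G)

namespace LeavittPathAlgebra

variable (K : Type) [Field K] (G : FinGraph)

/-- The image of a vertex in the Leavitt path algebra. -/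
def vert (v : G.V) : LeavittPathAlgebra K G :=
  RingQuot.mkAlgHom K (LeavittRel K G) (FreeAlgebra.ι K (LPAGen.vert v))

/-- The image of an edge in the Leavitt path algebra. -/
def edge (e : G.E) : LeavittPathAlgebra K G :=
  RingQuot.mkAlgHom K (LeavittRel K G) (FreeAlgebra.ι K (LPAGen.edge e))

/-- The image of a ghost edge in the Leavitt path algebra. -/
def ghost (e : G.E) : LeavittPathAlgebra K G :=
  RingQuot.mkAlgHom K (LeavittRel K G) (FreeAlgebra.ι K (LPAGen.ghost e))

end LeavittPathAlgebra

/-! ## Ring-theoretic notions -/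

/-- Two unital rings are Morita equivalent if their categories of left modules
are equivalent. -/
def MoritaEquivalent (R S : Type) [Ring R] [Ring S] : Prop :=
  Nonempty (ModuleCat.{0} R ≌ ModuleCat.{0} S)

/-- An idempotent `e` of a ring `R` is full if `R e R = R`, i.e. `1` is a finite
sum of elements of the form `a * e * b`. -/
def IsFullIdempotent {R : Type} [Ring R] (e : R) : Prop :=
  IsIdempotentElem e ∧ ∃ (n : ℕ) (a b : Fin n → R), (∑ i, a i * e * b i) = 1

/-- `S` is isomorphic, as a (nonunital) `K`-algebra, to the corner ring
`ε R ε = {x : R | ε * x * ε = x}` of `R`. -/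
def IsCornerIso (K : Type) [Field K] (S R : Type) [Ring S] [Ring R]
    [Algebra K S] [Algebra K R] (ε : R) : Prop :=
  ∃ φ : S →ₙₐ[K] R, Function.Injective φ ∧ Set.range φ = {x : R | ε * x * ε = x}

/-- A module `Q` is a generator for the category of left `R`-modules iff `R` is
an epimorphic image (equivalently, a direct summand) of a finite direct sum of
copies of `Q`. -/
def IsGenerator (R Q : Type) [Ring R] [AddCommGroup Q] [Module R Q] : Prop :=
  ∃ (n : ℕ) (f : (Fin n → Q) →ₗ[R] R), Function.Surjective f

/-! ### Generators, relations and the universal property -/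

namespace LeavittPathAlgebra

variable {K : Type} [Field K] {G : FinGraph}

theorem vert_mul_vert (v w : G.V) :
    vert K G v * vert K G w = if v = w then vert K G v else 0 := by
  have h := RingQuot.mkAlgHom_rel K (LeavittRel.vertMul (K := K) (G := G) v w)
  rw [map_mul] at h
  unfold vert
  rw [h]
  split_ifs <;> simp

theorem vert_mul_self (v : G.V) : vert K G v * vert K G v = vert K G v := by
  simp [vert_mul_vert]

theorem vert_mul_edge (v : G.V) (e : G.E) :
    vert K G v * edge K G e = if v = G.s e then edge K G e else 0 := by
  have h := RingQuot.mkAlgHom_rel K (LeavittRel.edgeLeft (K := K) (G := G) e)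
  rw [map_mul] at h
  change vert K G _ * edge K G e = edge K G e at h
  rw [← h, ← mul_assoc, vert_mul_vert]
  split_ifs with hv
  · rw [hv, h]
  · simp

theorem edge_mul_vert (e : G.E) (v : G.V) :
    edge K G e * vert K G v = if G.r e = v then edge K G e else 0 := by
  have h := RingQuot.mkAlgHom_rel K (LeavittRel.edgeRight (K := K) (G := G) e)
  rw [map_mul] at h
  change edge K G e * vert K G _ = edge K G e at h
  rw [← h, mul_assoc, vert_mul_vert]
  split_ifs with hv <;> simp

theorem vert_mul_ghost (v : G.V) (e : G.E) :
    vert K G v * ghost K G e = if v = G.r e then ghost K G e else 0 := by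
  have h := RingQuot.mkAlgHom_rel K (LeavittRel.ghostLeft (K := K) (G := G) e)
  rw [map_mul] at h
  change vert K G _ * ghost K G e = ghost K G e at h
  rw [← h, ← mul_assoc, vert_mul_vert]
  split_ifs with hv
  · rw [hv, h]
  · simp

theorem ghost_mul_vert (e : G.E) (v : G.V) :
    ghost K G e * vert K G v = if G.s e = v then ghost K G e else 0 := by
  have h := RingQuot.mkAlgHom_rel K (LeavittRel.ghostRight (K := K) (G := G) e)
  rw [map_mul] at h
  change ghost K G e * vert K G _ = ghost K G e at h
  rw [← h, mul_assoc, vert_mul_vert]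
  split_ifs with hv <;> simp

theorem ghost_mul_edge (e f : G.E) :
    ghost K G e * edge K G f = if e = f then vert K G (G.r e) else 0 := by
  have h := RingQuot.mkAlgHom_rel K (LeavittRel.ghostEdge (K := K) (G := G) e f)
  rw [map_mul] at h
  unfold vert edge ghost
  rw [h]
  split_ifs <;> simp

theorem vert_eq_sum (v : G.V) (hv : G.IsRegular v) :
    vert K G v = ∑ e ∈ Finset.univ.filter (fun e : G.E => G.s e = v),
      edge K G e * ghost K G e := by
  have h := RingQuot.mkAlgHom_rel K (LeavittRel.cuntzKrieger (K := K) (G := G) v hv)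
  simp only [map_sum, map_mul] at h
  exact h

theorem one_eq_sum : (1 : LeavittPathAlgebra K G) = ∑ v : G.V, vert K G v := by
  have h := RingQuot.mkAlgHom_rel K (LeavittRel.unit (K := K) (G := G))
  simp only [map_sum, map_one] at h
  exact h

theorem eq_sum_vert_mul (x : LeavittPathAlgebra K G) : x = ∑ v : G.V, vert K G v * x := by
  rw [← Finset.sum_mul, ← one_eq_sum, one_mul]

/-- A family of elements of a `K`-algebra `A` satisfying the defining relations of `L_K(G)`. -/
structure Family (K : Type) [Field K] (G : FinGraph) (A : Type) [Ring A] [Algebra K A] where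
  v : G.V → A
  e : G.E → A
  g : G.E → A
  vv : ∀ a b, v a * v b = if a = b then v a else 0
  se : ∀ a, v (G.s a) * e a = e a
  er : ∀ a, e a * v (G.r a) = e a
  rg : ∀ a, v (G.r a) * g a = g a
  gs : ∀ a, g a * v (G.s a) = g a
  ge : ∀ a b, g a * e b = if a = b then v (G.r a) else 0
  ck : ∀ a, G.IsRegular a → v a = ∑ b ∈ Finset.univ.filter (fun b : G.E => G.s b = a), e b * g b
  one : 1 = ∑ a, v a

namespace Family

variable {A : Type} [Ring A] [Algebra K A] (φ : Family K G A)

/-- The images of the generators. -/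
def gen : LPAGen G → A
  | .vert a => φ.v a
  | .edge a => φ.e a
  | .ghost a => φ.g a

theorem respects ⦃x y : FreeAlgebra K (LPAGen G)⦄ (h : LeavittRel K G x y) :
    FreeAlgebra.lift K φ.gen x = FreeAlgebra.lift K φ.gen y := by
  induction h with
  | vertMul a b =>
    have := φ.vv a b
    split_ifs at this ⊢ <;> simpa [gen] using this
  | edgeLeft a => simpa [gen] using φ.se a
  | edgeRight a => simpa [gen] using φ.er a
  | ghostLeft a => simpa [gen] using φ.rg a
  | ghostRight a => simpa [gen] using φ.gs a
  | ghostEdge a b =>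
    have := φ.ge a b
    split_ifs at this ⊢ <;> simpa [gen] using this
  | cuntzKrieger a ha => simpa [gen] using φ.ck a ha
  | unit => simpa [gen] using φ.one

/-- The homomorphism out of `L_K(G)` given by its universal property. -/
noncomputable def hom : LeavittPathAlgebra K G →ₐ[K] A :=
  RingQuot.liftAlgHom K ⟨FreeAlgebra.lift K φ.gen, φ.respects⟩

theorem hom_vert (a : G.V) : φ.hom (vert K G a) = φ.v a := by
  simp [hom, vert, gen, RingQuot.liftAlgHom_mkAlgHom_apply]

theorem hom_edge (a : G.E) : φ.hom (edge K G a) = φ.e a := by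
  simp [hom, edge, gen, RingQuot.liftAlgHom_mkAlgHom_apply]

theorem hom_ghost (a : G.E) : φ.hom (ghost K G a) = φ.g a := by
  simp [hom, ghost, gen, RingQuot.liftAlgHom_mkAlgHom_apply]

end Family

/-- A subspace that contains `1` and is stable under left multiplication by the generators
is everything. -/
theorem mem_of_stable (S : Submodule K (LeavittPathAlgebra K G)) (h1 : 1 ∈ S)
    (hv : ∀ a, ∀ x ∈ S, vert K G a * x ∈ S) (he : ∀ a, ∀ x ∈ S, edge K G a * x ∈ S)
    (hg : ∀ a, ∀ x ∈ S, ghost K G a * x ∈ S) (x : LeavittPathAlgebra K G) : x ∈ S := by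
  obtain ⟨y, rfl⟩ := RingQuot.mkAlgHom_surjective K (LeavittRel K G) x
  have key : ∀ z ∈ S, RingQuot.mkAlgHom K (LeavittRel K G) y * z ∈ S := by
    induction y using FreeAlgebra.induction with
    | grade0 r =>
      intro z hz
      rw [AlgHom.commutes, ← Algebra.smul_def]
      exact S.smul_mem _ hz
    | grade1 a =>
      intro z hz
      cases a with
      | vert a => exact hv a z hz
      | edge a => exact he a z hz
      | ghost a => exact hg a z hz
    | mul a b ha hb =>
      intro z hz
      rw [map_mul, mul_assoc]
      exact ha _ (hb _ hz)
    | add a b ha hb =>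
      intro z hz
      rw [map_add, add_mul]
      exact S.add_mem (ha _ hz) (hb _ hz)
  simpa using key 1 h1

/-! ### A representation killing a hereditary saturated set of vertices -/

section Rep

variable (H : G.V → Prop)

/-- Basis of the representation: countably many vectors at each vertex outside `H`. -/
abbrev RepIdx : Type := {p : G.V × ℕ // ¬ H p.1}

/-- Basis vectors at the range of `e`; empty when `r(e) ∈ H`. -/
abbrev RepFib (e : G.E) : Type := {_j : ℕ // ¬ H (G.r e)}

/-- The inclusion of the basis vectors sitting at `r(e)`. -/
def repInc (e : G.E) (j : RepFib H e) : RepIdx H := ⟨(G.r e, j.1), j.2⟩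

variable {H}

theorem repInc_injective (e : G.E) : Function.Injective (repInc H e) := by
  rintro ⟨i, hi⟩ ⟨j, hj⟩ h
  simpa [repInc] using h

/-- The basis vectors at a regular vertex `v` can be distributed among the edges leaving `v`:
both sides of the required bijection are empty (`v ∈ H`) or countably infinite. -/
theorem exists_branching (hher : ∀ e, H (G.s e) → H (G.r e))
    (hsat : ∀ v, G.IsRegular v → (∀ e, G.s e = v → H (G.r e)) → H v) :
    ∃ σ : (e : G.E) → RepFib H e → RepIdx H,
      (∀ e j, (σ e j).1.1 = G.s e) ∧ (∀ e, Function.Injective (σ e)) ∧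
      (∀ e f i j, σ e i = σ f j → e = f) ∧
      (∀ z : RepIdx H, G.IsRegular z.1.1 → ∃ e j, σ e j = z) := by
  have key : ∀ v : G.V, G.IsRegular v →
      Nonempty ((Σ e : {e : G.E // G.s e = v}, RepFib H e.1) ≃ {_j : ℕ // ¬ H v}) := by
    intro v hv
    by_cases h : H v
    · have : IsEmpty {_j : ℕ // ¬ H v} := ⟨fun j => j.2 h⟩
      have : IsEmpty (Σ e : {e : G.E // G.s e = v}, RepFib H e.1) :=
        ⟨fun p => p.2.2 (hher _ (by rw [p.1.2]; exact h))⟩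
      exact ⟨Equiv.equivOfIsEmpty _ _⟩
    · have hne : ∃ e, G.s e = v ∧ ¬ H (G.r e) := by
        by_contra hcon
        push Not at hcon
        exact h (hsat v hv hcon)
      obtain ⟨e, he, hr⟩ := hne
      have : Infinite {_j : ℕ // ¬ H v} :=
        Infinite.of_injective (fun j : ℕ => (⟨j, h⟩ : {_j : ℕ // ¬ H v}))
          (fun a b hab => by simpa using hab)
      have : Infinite (Σ e : {e : G.E // G.s e = v}, RepFib H e.1) :=
        Infinite.of_injective
          (fun j : ℕ => (⟨⟨e, he⟩, ⟨j, hr⟩⟩ : Σ e : {e : G.E // G.s e = v}, RepFib H e.1))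
          (fun a b hab => by simpa using hab)
      exact nonempty_equiv_of_countable
  have hkey : ∀ (v w : G.V) (hv : G.IsRegular v) (hw : G.IsRegular w)
      (p : Σ e : {e : G.E // G.s e = v}, RepFib H e.1)
      (q : Σ e : {e : G.E // G.s e = w}, RepFib H e.1),
      v = w → ((key v hv).some p).1 = ((key w hw).some q).1 →
        p.1.1 = q.1.1 ∧ p.2.1 = q.2.1 := by
    rintro v w hv hw p q rfl h
    have := (key v hv).some.injective (Subtype.ext h)
    subst this
    exact ⟨rfl, rfl⟩
  refine ⟨fun e j => ⟨(G.s e, ((key (G.s e) ⟨e, rfl⟩).some ⟨⟨e, rfl⟩, j⟩).1),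
    ((key (G.s e) ⟨e, rfl⟩).some ⟨⟨e, rfl⟩, j⟩).2⟩, fun e j => rfl, ?_, ?_, ?_⟩
  · intro e i j h
    have h2 := congrArg (fun z : RepIdx H => z.1.2) h
    obtain ⟨_, h3⟩ := hkey _ _ ⟨e, rfl⟩ ⟨e, rfl⟩ ⟨⟨e, rfl⟩, i⟩ ⟨⟨e, rfl⟩, j⟩ rfl h2
    exact Subtype.ext h3
  · intro e f i j h
    have h1 := congrArg (fun z : RepIdx H => z.1.1) h
    have h2 := congrArg (fun z : RepIdx H => z.1.2) h
    exact (hkey _ _ ⟨e, rfl⟩ ⟨f, rfl⟩ ⟨⟨e, rfl⟩, i⟩ ⟨⟨f, rfl⟩, j⟩ h1 h2).1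
  · rintro ⟨⟨v, k⟩, hvk⟩ hv
    obtain ⟨⟨⟨e, he⟩, j⟩, hp⟩ := (key v hv).some.surjective ⟨k, hvk⟩
    subst he
    refine ⟨e, j, ?_⟩
    apply Subtype.ext
    apply Prod.ext
    · rfl
    · exact congrArg Subtype.val hp

/-- For a hereditary saturated set `H` there is a representation of `L_K(G)` in which exactly the
vertices of `H` act as zero. -/
theorem exists_rep (K : Type) [Field K] (hher : ∀ e, H (G.s e) → H (G.r e))
    (hsat : ∀ v, G.IsRegular v → (∀ e, G.s e = v → H (G.r e)) → H v) :
    ∃ (N : Type) (_ : AddCommGroup N) (_ : Module K N)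
      (φ : LeavittPathAlgebra K G →ₐ[K] Module.End K N),
      ∀ v, φ (vert K G v) = 0 ↔ H v := by
  classical
  obtain ⟨σ, hs, hinj, hdisj, hcov⟩ := exists_branching hher hsat
  -- vertices act as coordinate projections, an edge `e` as the partial shift sending the basis
  -- vectors at `r(e)` to those assigned to `e` by `σ`, and `e*` as the inverse shift
  let pv : G.V → Module.End K (RepIdx H → K) := fun v =>
    LinearMap.pi fun z => if z.1.1 = v then LinearMap.proj z else 0
  have pv_apply : ∀ v f z, pv v f z = if z.1.1 = v then f z else 0 := by
    intro v f z
    simp only [pv, LinearMap.pi_apply]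
    split_ifs <;> rfl
  let pe : G.E → Module.End K (RepIdx H → K) := fun e =>
    Function.ExtendByZero.linearMap K (σ e) ∘ₗ LinearMap.funLeft K K (repInc H e)
  let pg : G.E → Module.End K (RepIdx H → K) := fun e =>
    Function.ExtendByZero.linearMap K (repInc H e) ∘ₗ LinearMap.funLeft K K (σ e)
  have pe_in : ∀ e f j, pe e f (σ e j) = f (repInc H e j) := by
    intro e f j
    exact (hinj e).extend_apply _ _ j
  have pe_out : ∀ e f z, (¬ ∃ j, σ e j = z) → pe e f z = 0 := by
    intro e f z h
    exact Function.extend_apply' _ _ _ h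
  have pg_in : ∀ e f j, pg e f (repInc H e j) = f (σ e j) := by
    intro e f j
    exact (repInc_injective e).extend_apply _ _ j
  have pg_out : ∀ e f (z : RepIdx H), z.1.1 ≠ G.r e → pg e f z = 0 := by
    intro e f z h
    refine Function.extend_apply' _ _ _ ?_
    rintro ⟨j, rfl⟩
    exact h rfl
  have inc_of : ∀ e (z : RepIdx H), z.1.1 = G.r e → ∃ j, repInc H e j = z := by
    rintro e ⟨⟨v, k⟩, hv⟩ h
    obtain rfl : v = G.r e := h
    exact ⟨⟨k, hv⟩, rfl⟩
  have s_of : ∀ e z, (∃ j, σ e j = z) → z.1.1 = G.s e := by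
    rintro e z ⟨j, rfl⟩
    exact hs e j
  let Φ : Family K G (Module.End K (RepIdx H → K)) :=
    { v := pv
      e := pe
      g := pg
      vv := by
        intro a b
        apply LinearMap.ext; intro f; funext z
        rw [Module.End.mul_apply, pv_apply, pv_apply]
        by_cases hab : a = b
        · subst hab
          rw [if_pos rfl, pv_apply]
          split_ifs <;> rfl
        · rw [if_neg hab, LinearMap.zero_apply, Pi.zero_apply]
          split_ifs with h1 h2
          · exact absurd (h1.symm.trans h2) hab
          · rfl
          · rfl
      se := by
        intro e
        apply LinearMap.ext; intro f; funext z
        rw [Module.End.mul_apply, pv_apply]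
        split_ifs with h
        · rfl
        · rw [pe_out]
          exact fun h' => h (s_of e z h')
      er := by
        intro e
        apply LinearMap.ext; intro f; funext z
        rw [Module.End.mul_apply]
        by_cases h : ∃ j, σ e j = z
        · obtain ⟨j, rfl⟩ := h
          rw [pe_in, pe_in, pv_apply]
          exact if_pos rfl
        · rw [pe_out _ _ _ h, pe_out _ _ _ h]
      rg := by
        intro e
        apply LinearMap.ext; intro f; funext z
        rw [Module.End.mul_apply, pv_apply]
        split_ifs with h
        · rfl
        · rw [pg_out _ _ _ h]
      gs := by
        intro e
        apply LinearMap.ext; intro f; funext z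
        rw [Module.End.mul_apply]
        by_cases h : z.1.1 = G.r e
        · obtain ⟨j, rfl⟩ := inc_of e z h
          rw [pg_in, pg_in, pv_apply, if_pos (hs e j)]
        · rw [pg_out _ _ _ h, pg_out _ _ _ h]
      ge := by
        intro e e'
        apply LinearMap.ext; intro f; funext z
        rw [Module.End.mul_apply]
        by_cases h : z.1.1 = G.r e
        · obtain ⟨j, rfl⟩ := inc_of e z h
          rw [pg_in]
          by_cases hee : e = e'
          · subst hee
            rw [pe_in, if_pos rfl, pv_apply]
            exact (if_pos rfl).symm
          · rw [if_neg hee, pe_out]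
            · rfl
            · rintro ⟨i, hi⟩
              exact hee (hdisj _ _ _ _ hi).symm
        · rw [pg_out _ _ _ h]
          split_ifs
          · rw [pv_apply, if_neg h]
          · rfl
      ck := by
        intro v hv
        apply LinearMap.ext; intro f; funext z
        rw [pv_apply, LinearMap.sum_apply, Finset.sum_apply]
        split_ifs with h
        · obtain ⟨e, j, rfl⟩ := hcov z (h ▸ hv)
          rw [Finset.sum_eq_single e]
          · rw [Module.End.mul_apply, pe_in, pg_in]
          · intro e' _ hne
            rw [Module.End.mul_apply, pe_out]
            rintro ⟨i, hi⟩
            exact hne (hdisj _ _ _ _ hi)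
          · intro hne
            refine absurd (Finset.mem_filter.2 ⟨Finset.mem_univ e, ?_⟩) hne
            exact (hs e j).symm.trans h
        · symm
          apply Finset.sum_eq_zero
          intro e he
          rw [Module.End.mul_apply, pe_out]
          intro h'
          exact h ((s_of e z h').trans (Finset.mem_filter.1 he).2)
      one := by
        apply LinearMap.ext; intro f; funext z
        rw [LinearMap.sum_apply, Finset.sum_apply]
        simp [pv_apply] }
  refine ⟨RepIdx H → K, inferInstance, inferInstance, Φ.hom, fun v => ?_⟩
  rw [Family.hom_vert]
  constructor
  · intro h
    by_contra hv
    have := congrArg (fun T : Module.End K (RepIdx H → K) => T (fun _ => 1) ⟨(v, 0), hv⟩) h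
    simp [Φ, pv_apply] at this
  · intro h
    apply LinearMap.ext; intro f; funext z
    change pv v f z = 0
    rw [pv_apply, if_neg]
    intro hz
    exact z.2 (hz ▸ h)

end Rep

theorem vert_ne_zero (v : G.V) : vert K G v ≠ 0 := by
  obtain ⟨N, _, _, φ, h⟩ := exists_rep (G := G) (H := fun _ => False) K (fun _ h => h)
    (fun v ⟨e, he⟩ h => h e he)
  intro h0
  exact (h v).1 (by rw [h0, map_zero])

/-! ### The grading by path length -/

open AddMonoidAlgebra in
/-- The coaction `L_K(G) → L_K(G)[ℤ]` encoding the grading with `deg v = 0`, `deg e = 1`,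
`deg e* = -1`. -/
noncomputable def coaction :
    LeavittPathAlgebra K G →ₐ[K] AddMonoidAlgebra (LeavittPathAlgebra K G) ℤ :=
  Family.hom
    { v := fun a => single 0 (vert K G a)
      e := fun a => single 1 (edge K G a)
      g := fun a => single (-1) (ghost K G a)
      vv := by
        intro a b
        rw [single_mul_single, vert_mul_vert]
        split_ifs <;> simp
      se := by intro a; rw [single_mul_single, vert_mul_edge, if_pos rfl]; rfl
      er := by intro a; rw [single_mul_single, edge_mul_vert, if_pos rfl]; rfl
      rg := by intro a; rw [single_mul_single, vert_mul_ghost, if_pos rfl]; rfl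
      gs := by intro a; rw [single_mul_single, ghost_mul_vert, if_pos rfl]; rfl
      ge := by
        intro a b
        rw [single_mul_single, ghost_mul_edge]
        split_ifs <;> simp
      ck := by
        intro a ha
        simp only [single_mul_single]
        rw [vert_eq_sum a ha]
        exact map_sum (AddMonoidAlgebra.singleAddHom (0 : ℤ)) _ _
      one := by
        rw [AddMonoidAlgebra.one_def, one_eq_sum]
        exact map_sum (AddMonoidAlgebra.singleAddHom (0 : ℤ)) _ _ }

/-- `x` is homogeneous of degree `d`. -/
def IsHom (d : ℤ) (x : LeavittPathAlgebra K G) : Prop :=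
  coaction x = AddMonoidAlgebra.single d x

theorem isHom_vert (v : G.V) : IsHom 0 (vert K G v) := Family.hom_vert _ v
theorem isHom_edge (e : G.E) : IsHom 1 (edge K G e) := Family.hom_edge _ e
theorem isHom_ghost (e : G.E) : IsHom (-1) (ghost K G e) := Family.hom_ghost _ e

theorem IsHom.mul {a b : ℤ} {x y : LeavittPathAlgebra K G} (hx : IsHom a x) (hy : IsHom b y) :
    IsHom (a + b) (x * y) := by
  unfold IsHom at *
  rw [map_mul, hx, hy, AddMonoidAlgebra.single_mul_single]

theorem isHom_zero (d : ℤ) : IsHom d (0 : LeavittPathAlgebra K G) := by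
  unfold IsHom
  rw [map_zero]
  exact (map_zero (AddMonoidAlgebra.singleAddHom d)).symm

theorem IsHom.add {d : ℤ} {x y : LeavittPathAlgebra K G} (hx : IsHom d x) (hy : IsHom d y) :
    IsHom d (x + y) := by
  unfold IsHom at *
  rw [map_add, hx, hy]
  exact (map_add (AddMonoidAlgebra.singleAddHom d) x y).symm

theorem IsHom.smul {d : ℤ} {x : LeavittPathAlgebra K G} (c : K) (hx : IsHom d x) :
    IsHom d (c • x) := by
  unfold IsHom at *
  rw [map_smul, hx, AddMonoidAlgebra.smul_single]

theorem IsHom.sum {d : ℤ} {ι : Type} (s : Finset ι) {x : ι → LeavittPathAlgebra K G}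
    (hx : ∀ i ∈ s, IsHom d (x i)) : IsHom d (∑ i ∈ s, x i) := by
  classical
  induction s using Finset.induction_on with
  | empty => exact isHom_zero d
  | insert a s ha ih =>
    rw [Finset.sum_insert ha]
    exact (hx _ (Finset.mem_insert_self _ _)).add
      (ih fun i hi => hx i (Finset.mem_insert_of_mem hi))

/-- The homogeneous component of degree `d`. -/
noncomputable def comp (d : ℤ) : LeavittPathAlgebra K G →ₗ[K] LeavittPathAlgebra K G where
  toFun x := (coaction x).coeff d
  map_add' x y := by simp
  map_smul' c x := by simp

theorem comp_of_isHom {d : ℤ} {x : LeavittPathAlgebra K G} (hx : IsHom d x) : comp d x = x := by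
  unfold IsHom at hx
  change (coaction x).coeff d = x
  rw [hx, AddMonoidAlgebra.coeff_single, Finsupp.single_eq_same]

theorem comp_of_isHom_ne {d d' : ℤ} {x : LeavittPathAlgebra K G} (hx : IsHom d x) (h : d ≠ d') :
    comp d' x = 0 := by
  unfold IsHom at hx
  change (coaction x).coeff d' = 0
  rw [hx, AddMonoidAlgebra.coeff_single, Finsupp.single_eq_of_ne (Ne.symm h)]

end LeavittPathAlgebra

/-! ### Combinations of ghost paths -/

namespace LeavittPathAlgebra

variable {K : Type} [Field K] {G : FinGraph}

/-- The `K`-span of the ghost paths `μ*` of length `d`. -/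
noncomputable def Pd (K : Type) [Field K] (G : FinGraph) : ℕ → Submodule K (LeavittPathAlgebra K G)
  | 0 => LinearMap.range (Fintype.linearCombination K (vert K G))
  | d + 1 => (Submodule.pi Set.univ fun _ : G.E => Pd K G d).map
      (∑ e : G.E, LinearMap.mulLeft K (ghost K G e) ∘ₗ LinearMap.proj e)

theorem mem_Pd_zero {x : LeavittPathAlgebra K G} :
    x ∈ Pd K G 0 ↔ ∃ c : G.V → K, x = ∑ v, c v • vert K G v := by
  simp only [Pd, LinearMap.mem_range, Fintype.linearCombination_apply]
  exact ⟨fun ⟨c, h⟩ => ⟨c, h.symm⟩, fun ⟨c, h⟩ => ⟨c, h.symm⟩⟩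

theorem mem_Pd_succ {d : ℕ} {x : LeavittPathAlgebra K G} :
    x ∈ Pd K G (d + 1) ↔ ∃ y : G.E → LeavittPathAlgebra K G,
      (∀ e, y e ∈ Pd K G d) ∧ x = ∑ e, ghost K G e * y e := by
  simp only [Pd, Submodule.mem_map, Submodule.mem_pi, Set.mem_univ, true_imp_iff,
    LinearMap.sum_apply, LinearMap.comp_apply, LinearMap.mulLeft_apply, LinearMap.proj_apply]
  exact ⟨fun ⟨y, hy, h⟩ => ⟨y, hy, h.symm⟩, fun ⟨y, hy, h⟩ => ⟨y, hy, h.symm⟩⟩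

theorem vert_mem_Pd (v : G.V) : vert K G v ∈ Pd K G 0 := by
  rw [mem_Pd_zero]
  refine ⟨Pi.single v 1, ?_⟩
  rw [Finset.sum_eq_single v]
  · simp
  · intro b _ hb
    simp [Pi.single_eq_of_ne hb]
  · simp

theorem ghost_mul_mem_Pd (e : G.E) {d : ℕ} {x : LeavittPathAlgebra K G} (hx : x ∈ Pd K G d) :
    ghost K G e * x ∈ Pd K G (d + 1) := by
  rw [mem_Pd_succ]
  refine ⟨Pi.single e x, fun f => ?_, ?_⟩
  · by_cases h : f = e
    · subst h; simpa using hx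
    · rw [Pi.single_eq_of_ne h]; exact zero_mem _
  · rw [Finset.sum_eq_single e]
    · simp
    · intro b _ hb
      simp [Pi.single_eq_of_ne hb]
    · simp

theorem isHom_of_mem_Pd {d : ℕ} {x : LeavittPathAlgebra K G} (hx : x ∈ Pd K G d) :
    IsHom (-d) x := by
  induction d generalizing x with
  | zero =>
    obtain ⟨c, rfl⟩ := mem_Pd_zero.1 hx
    exact IsHom.sum _ fun v _ => by simpa using (isHom_vert v).smul (c v)
  | succ d ih =>
    obtain ⟨y, hy, rfl⟩ := mem_Pd_succ.1 hx
    refine IsHom.sum _ fun e _ => ?_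
    have := (isHom_ghost (K := K) e).mul (ih (hy e))
    convert this using 1
    push_cast
    ring

theorem Pd_zero_mul_vert {x : LeavittPathAlgebra K G} (hx : x ∈ Pd K G 0) (v : G.V) :
    ∃ c : K, x * vert K G v = c • vert K G v := by
  obtain ⟨c, rfl⟩ := mem_Pd_zero.1 hx
  refine ⟨c v, ?_⟩
  rw [Finset.sum_mul, Finset.sum_eq_single v]
  · rw [smul_mul_assoc, vert_mul_self]
  · intro b _ hb
    rw [smul_mul_assoc, vert_mul_vert, if_neg hb, smul_zero]
  · simp

theorem vert_mul_Pd_zero {x : LeavittPathAlgebra K G} (hx : x ∈ Pd K G 0) (v : G.V) :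
    ∃ c : K, vert K G v * x = c • vert K G v := by
  obtain ⟨c, rfl⟩ := mem_Pd_zero.1 hx
  refine ⟨c v, ?_⟩
  rw [Finset.mul_sum, Finset.sum_eq_single v]
  · rw [mul_smul_comm, vert_mul_self]
  · intro b _ hb
    rw [mul_smul_comm, vert_mul_vert, if_neg (Ne.symm hb), smul_zero]
  · simp

theorem vert_mul_mem_Pd (v : G.V) {d : ℕ} {x : LeavittPathAlgebra K G} (hx : x ∈ Pd K G d) :
    vert K G v * x ∈ Pd K G d := by
  cases d with
  | zero =>
    obtain ⟨c, h⟩ := vert_mul_Pd_zero hx v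
    rw [h]
    exact Submodule.smul_mem _ _ (vert_mem_Pd v)
  | succ d =>
    obtain ⟨y, hy, rfl⟩ := mem_Pd_succ.1 hx
    rw [Finset.mul_sum]
    refine Submodule.sum_mem _ fun e _ => ?_
    rw [← mul_assoc, vert_mul_ghost]
    split_ifs
    · exact ghost_mul_mem_Pd e (hy e)
    · simp

theorem mul_mem_Pd {a b : ℕ} {x y : LeavittPathAlgebra K G} (hx : x ∈ Pd K G a)
    (hy : y ∈ Pd K G b) : x * y ∈ Pd K G (a + b) := by
  induction a generalizing x with
  | zero =>
    obtain ⟨c, rfl⟩ := mem_Pd_zero.1 hx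
    rw [zero_add, Finset.sum_mul]
    refine Submodule.sum_mem _ fun v _ => ?_
    rw [smul_mul_assoc]
    exact Submodule.smul_mem _ _ (vert_mul_mem_Pd v hy)
  | succ a ih =>
    obtain ⟨z, hz, rfl⟩ := mem_Pd_succ.1 hx
    rw [Finset.sum_mul, Nat.add_right_comm]
    refine Submodule.sum_mem _ fun e _ => ?_
    rw [mul_assoc]
    exact ghost_mul_mem_Pd e (ih (hz e))

theorem mul_vert_mem_Pd (v : G.V) {d : ℕ} {x : LeavittPathAlgebra K G} (hx : x ∈ Pd K G d) :
    x * vert K G v ∈ Pd K G d := mul_mem_Pd hx (vert_mem_Pd v)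

/-- Elements of positive ghost degree, written with normalised coefficients. -/
theorem mem_Pd_succ' {d : ℕ} {x : LeavittPathAlgebra K G} (hx : x ∈ Pd K G (d + 1)) :
    ∃ y : G.E → LeavittPathAlgebra K G, (∀ e, y e ∈ Pd K G d) ∧
      (∀ e, vert K G (G.s e) * y e = y e) ∧ x = ∑ e, ghost K G e * y e := by
  obtain ⟨y, hy, rfl⟩ := mem_Pd_succ.1 hx
  refine ⟨fun e => vert K G (G.s e) * y e, fun e => vert_mul_mem_Pd _ (hy e), fun e => ?_, ?_⟩
  · rw [← mul_assoc, vert_mul_self]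
  · refine Finset.sum_congr rfl fun e _ => ?_
    rw [← mul_assoc, ghost_mul_vert, if_pos rfl]

/-- Right multiplication by an edge strips the last letter of each ghost path. -/
theorem mul_edge_mem_Pd {d : ℕ} {x : LeavittPathAlgebra K G} (hx : x ∈ Pd K G (d + 1)) (f : G.E) :
    x * edge K G f ∈ Pd K G d := by
  induction d generalizing x with
  | zero =>
    obtain ⟨y, hy, rfl⟩ := mem_Pd_succ.1 hx
    rw [Finset.sum_mul]
    refine Submodule.sum_mem _ fun e _ => ?_
    obtain ⟨c, hc⟩ := Pd_zero_mul_vert (hy e) (G.s f)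
    have : edge K G f = vert K G (G.s f) * edge K G f := by rw [vert_mul_edge, if_pos rfl]
    rw [this, mul_assoc, ← mul_assoc (y e), hc, smul_mul_assoc, ← this, mul_smul_comm,
      ghost_mul_edge]
    refine Submodule.smul_mem _ _ ?_
    split_ifs
    · exact vert_mem_Pd _
    · exact zero_mem _
  | succ d ih =>
    obtain ⟨y, hy, rfl⟩ := mem_Pd_succ.1 hx
    rw [Finset.sum_mul]
    refine Submodule.sum_mem _ fun e _ => ?_
    rw [mul_assoc]
    exact ghost_mul_mem_Pd e (ih (hy e))

theorem eq_sum_mul_ghost {d : ℕ} {x : LeavittPathAlgebra K G} (hx : x ∈ Pd K G (d + 1)) :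
    x = ∑ f, x * edge K G f * ghost K G f := by
  induction d generalizing x with
  | zero =>
    obtain ⟨y, hy, rfl⟩ := mem_Pd_succ.1 hx
    have key : ∀ e, ghost K G e * y e = ∑ f, ghost K G e * y e * edge K G f * ghost K G f := by
      intro e
      obtain ⟨c, hc⟩ := vert_mul_Pd_zero (hy e) (G.s e)
      have h1 : ghost K G e * y e = c • ghost K G e := by
        have : ghost K G e = ghost K G e * vert K G (G.s e) := by rw [ghost_mul_vert, if_pos rfl]
        rw [this, mul_assoc, hc, mul_smul_comm]
      rw [h1, Finset.sum_eq_single e]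
      · rw [smul_mul_assoc, smul_mul_assoc, ghost_mul_edge, if_pos rfl, vert_mul_ghost, if_pos rfl]
      · intro f _ hf
        rw [smul_mul_assoc, ghost_mul_edge, if_neg (Ne.symm hf), smul_zero, zero_mul]
      · simp
    simp only [Finset.sum_mul]
    rw [Finset.sum_comm]
    exact Finset.sum_congr rfl fun e _ => key e
  | succ d ih =>
    obtain ⟨y, hy, rfl⟩ := mem_Pd_succ.1 hx
    simp only [Finset.sum_mul]
    rw [Finset.sum_comm]
    refine Finset.sum_congr rfl fun e _ => ?_
    conv_lhs => rw [ih (hy e)]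
    rw [Finset.mul_sum]
    exact Finset.sum_congr rfl fun f _ => by simp only [mul_assoc]

/-- Distinct ghost edges are left independent over normalised coefficients. -/
theorem ghost_independent {d : ℕ} {y : G.E → LeavittPathAlgebra K G} (hy : ∀ e, y e ∈ Pd K G d)
    (hs : ∀ e, vert K G (G.s e) * y e = y e) (h0 : ∑ e, ghost K G e * y e = 0) (e : G.E) :
    y e = 0 := by
  induction d generalizing y e with
  | zero =>
    have hc : ∀ e, ∃ c : K, y e = c • vert K G (G.s e) := fun e => by
      obtain ⟨c, h⟩ := vert_mul_Pd_zero (hy e) (G.s e)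
      exact ⟨c, by rw [← hs e, h]⟩
    choose c hc using hc
    have h1 : ∑ f, ghost K G f * y f * edge K G e = 0 := by rw [← Finset.sum_mul, h0, zero_mul]
    rw [Finset.sum_eq_single e] at h1
    · rw [hc e, mul_smul_comm, ghost_mul_vert, if_pos rfl, smul_mul_assoc, ghost_mul_edge,
        if_pos rfl] at h1
      have : c e = 0 := by
        by_contra hne
        exact vert_ne_zero (K := K) (G.r e) ((smul_eq_zero.1 h1).resolve_left hne)
      rw [hc e, this, zero_smul]
    · intro f _ hf
      rw [hc f, mul_smul_comm, ghost_mul_vert, if_pos rfl, smul_mul_assoc, ghost_mul_edge,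
        if_neg hf, smul_zero]
    · simp
  | succ d ih =>
    rw [eq_sum_mul_ghost (hy e)]
    refine Finset.sum_eq_zero fun f _ => ?_
    have : y e * edge K G f = 0 := by
      refine ih (y := fun e => y e * edge K G f) (fun e => mul_edge_mem_Pd (hy e) f)
        (fun e => ?_) ?_ e
      · rw [← mul_assoc, hs]
      · simp only [← mul_assoc]
        rw [← Finset.sum_mul, h0, zero_mul]
    rw [this, zero_mul]

/-- The `K`-span of the ghost paths of length less than `N`. -/
noncomputable def Plt (K : Type) [Field K] (G : FinGraph) : ℕ → Submodule K (LeavittPathAlgebra K G)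
  | 0 => ⊥
  | N + 1 => Plt K G N ⊔ Pd K G N

theorem mem_Plt_succ {N : ℕ} {x : LeavittPathAlgebra K G} :
    x ∈ Plt K G (N + 1) ↔ ∃ y ∈ Plt K G N, ∃ z ∈ Pd K G N, y + z = x := Submodule.mem_sup

theorem Plt_mono : Monotone (Plt K G) := monotone_nat_of_le_succ fun _ => le_sup_left

theorem Pd_le_Plt {d N : ℕ} (h : d < N) : Pd K G d ≤ Plt K G N :=
  le_trans (le_sup_right : Pd K G d ≤ Plt K G (d + 1)) (Plt_mono h)

theorem Pd_mul_Plt {a b : ℕ} {x y : LeavittPathAlgebra K G} (hx : x ∈ Pd K G a)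
    (hy : y ∈ Plt K G b) : x * y ∈ Plt K G (a + b) := by
  induction b generalizing y with
  | zero => 
    have : y = 0 := hy
    rw [this, mul_zero]; exact zero_mem _
  | succ b ih =>
    obtain ⟨u, hu, v, hv, rfl⟩ := mem_Plt_succ.1 hy
    rw [mul_add]
    exact add_mem (Plt_mono (by omega) (ih hu)) (Pd_le_Plt (by omega) (mul_mem_Pd hx hv))

theorem Plt_mul_Plt {a b : ℕ} {x y : LeavittPathAlgebra K G} (hx : x ∈ Plt K G (a + 1))
    (hy : y ∈ Plt K G b) : x * y ∈ Plt K G (a + b) := by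
  induction a generalizing x with
  | zero =>
    obtain ⟨u, hu, v, hv, rfl⟩ := mem_Plt_succ.1 hx
    have : u = 0 := hu
    subst this
    rw [zero_add v]
    exact Pd_mul_Plt hv hy
  | succ a ih =>
    obtain ⟨u, hu, v, hv, rfl⟩ := mem_Plt_succ.1 hx
    rw [add_mul]
    exact add_mem (Plt_mono (by omega) (ih hu)) (Pd_mul_Plt hv hy)

theorem comp_of_mem_Pd {d : ℕ} {x : LeavittPathAlgebra K G} (hx : x ∈ Pd K G d) :
    comp (-d) x = x := comp_of_isHom (isHom_of_mem_Pd hx)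

theorem comp_of_mem_Plt {N j : ℕ} (h : N ≤ j) {x : LeavittPathAlgebra K G} (hx : x ∈ Plt K G N) :
    comp (-j) x = 0 := by
  induction N generalizing x with
  | zero =>
    have : x = 0 := hx
    rw [this, map_zero]
  | succ N ih =>
    obtain ⟨u, hu, v, hv, rfl⟩ := mem_Plt_succ.1 hx
    rw [map_add, ih (by omega) hu, zero_add]
    exact comp_of_isHom_ne (isHom_of_mem_Pd hv) (by omega)

theorem comp_add {N : ℕ} {x y : LeavittPathAlgebra K G} (hx : x ∈ Plt K G N) (hy : y ∈ Pd K G N) :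
    comp (-N) (x + y) = y := by
  rw [map_add, comp_of_mem_Plt le_rfl hx, zero_add, comp_of_mem_Pd hy]

theorem comp_mem_Pd {N : ℕ} {x : LeavittPathAlgebra K G} (hx : x ∈ Plt K G (N + 1)) :
    comp (-N) x ∈ Pd K G N := by
  obtain ⟨u, hu, v, hv, rfl⟩ := mem_Plt_succ.1 hx
  rwa [comp_add hu hv]

theorem sub_comp_mem {N : ℕ} {x : LeavittPathAlgebra K G} (hx : x ∈ Plt K G (N + 1)) :
    x - comp (-N) x ∈ Plt K G N := by
  obtain ⟨u, hu, v, hv, rfl⟩ := mem_Plt_succ.1 hx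
  rwa [comp_add hu hv, add_sub_cancel_right]

/-- Leading terms multiply. -/
theorem comp_mul {a b : ℕ} {x y : LeavittPathAlgebra K G} (hx : x ∈ Plt K G (a + 1))
    (hy : y ∈ Plt K G (b + 1)) :
    comp (-((a + b : ℕ) : ℤ)) (x * y) = comp (-a) x * comp (-b) y := by
  obtain ⟨u, hu, v, hv, rfl⟩ := mem_Plt_succ.1 hx
  obtain ⟨s, hs, t, ht, rfl⟩ := mem_Plt_succ.1 hy
  rw [comp_add hu hv, comp_add hs ht]
  have : (u + v) * (s + t) = (u * (s + t) + v * s) + v * t := by noncomm_ring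
  rw [this]
  refine comp_add (add_mem ?_ (Pd_mul_Plt hv hs)) (mul_mem_Pd hv ht)
  cases a with
  | zero =>
    have : u = 0 := hu
    rw [this, zero_mul]; exact zero_mem _
  | succ a => exact Plt_mono (by omega) (Plt_mul_Plt hu hy)

theorem mul_vert_mem_Plt {N : ℕ} {x : LeavittPathAlgebra K G} (hx : x ∈ Plt K G N) (v : G.V) :
    x * vert K G v ∈ Plt K G N := by
  cases N with
  | zero =>
    have : x = 0 := hx
    rw [this, zero_mul]; exact zero_mem _
  | succ N => exact Plt_mul_Plt hx (Pd_le_Plt Nat.one_pos (vert_mem_Pd v))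

theorem vert_mul_mem_Plt {N : ℕ} {x : LeavittPathAlgebra K G} (hx : x ∈ Plt K G N) (v : G.V) :
    vert K G v * x ∈ Plt K G N := by
  simpa using Pd_mul_Plt (vert_mem_Pd v) hx

/-! ### Filtering `L_K(G)` by the number of real edges -/

/-- The elements that all sinks bring into the span of ghost paths and all ghost edges bring
into `S`. -/
def LkNext (S : Submodule K (LeavittPathAlgebra K G)) :
    Submodule K (LeavittPathAlgebra K G) where
  carrier := {a | (∀ v, ¬ G.IsRegular v → ∃ N, vert K G v * a ∈ Plt K G N) ∧
    ∀ e, ghost K G e * a ∈ S}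
  zero_mem' := ⟨fun v _ => ⟨0, by rw [mul_zero]; exact zero_mem _⟩,
    fun e => by rw [mul_zero]; exact zero_mem _⟩
  add_mem' := fun ⟨h1, h2⟩ ⟨h1', h2'⟩ => ⟨fun v hv => by
    obtain ⟨N, h⟩ := h1 v hv
    obtain ⟨M, h'⟩ := h1' v hv
    exact ⟨max N M, by
      rw [mul_add]
      exact add_mem (Plt_mono (le_max_left _ _) h) (Plt_mono (le_max_right _ _) h')⟩,
    fun e => by rw [mul_add]; exact add_mem (h2 e) (h2' e)⟩
  smul_mem' := fun c a ⟨h1, h2⟩ => ⟨fun v hv => by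
    obtain ⟨N, h⟩ := h1 v hv
    exact ⟨N, by rw [mul_smul_comm]; exact Submodule.smul_mem _ c h⟩,
    fun e => by rw [mul_smul_comm]; exact Submodule.smul_mem _ c (h2 e)⟩

/-- `Lk k` consists of the elements that left multiplication by ghost paths of length `k` (or by
shorter ones starting at a sink) brings into `Lk 0`, the span of all ghost paths. -/
def Lk (K : Type) [Field K] (G : FinGraph) : ℕ → Submodule K (LeavittPathAlgebra K G)
  | 0 =>
    { carrier := {a | ∃ N, a ∈ Plt K G N}
      zero_mem' := ⟨0, zero_mem _⟩
      add_mem' := fun ⟨N, h⟩ ⟨M, h'⟩ => ⟨max N M,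
        add_mem (Plt_mono (le_max_left _ _) h) (Plt_mono (le_max_right _ _) h')⟩
      smul_mem' := fun c _ ⟨N, h⟩ => ⟨N, Submodule.smul_mem _ c h⟩ }
  | k + 1 => LkNext (Lk K G k)

theorem mem_Lk_zero {a : LeavittPathAlgebra K G} : a ∈ Lk K G 0 ↔ ∃ N, a ∈ Plt K G N := Iff.rfl

theorem mem_Lk_succ {k : ℕ} {a : LeavittPathAlgebra K G} : a ∈ Lk K G (k + 1) ↔
    (∀ v, ¬ G.IsRegular v → ∃ N, vert K G v * a ∈ Plt K G N) ∧
      ∀ e, ghost K G e * a ∈ Lk K G k := Iff.rfl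

theorem ghost_mul_mem_Plt (e : G.E) {N : ℕ} {x : LeavittPathAlgebra K G} (hx : x ∈ Plt K G N) :
    ghost K G e * x ∈ Plt K G (N + 1) := by
  have h : ghost K G e ∈ Pd K G 1 := by
    have := ghost_mul_mem_Pd e (vert_mem_Pd (K := K) (G.s e))
    rwa [ghost_mul_vert, if_pos rfl] at this
  rw [add_comm]
  exact Pd_mul_Plt h hx

theorem Lk_le_succ (k : ℕ) : Lk K G k ≤ Lk K G (k + 1) := by
  induction k with
  | zero =>
    rintro a ⟨N, hN⟩
    exact ⟨fun v _ => ⟨N, vert_mul_mem_Plt hN v⟩, fun e => ⟨N + 1, ghost_mul_mem_Plt e hN⟩⟩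
  | succ k ih =>
    rintro a ⟨h1, h2⟩
    exact ⟨h1, fun e => ih (h2 e)⟩

theorem Lk_mono : Monotone (Lk K G) := monotone_nat_of_le_succ Lk_le_succ

theorem vert_mul_mem_Lk (v : G.V) {k : ℕ} {a : LeavittPathAlgebra K G} (ha : a ∈ Lk K G k) :
    vert K G v * a ∈ Lk K G k := by
  cases k with
  | zero =>
    obtain ⟨N, hN⟩ := ha
    exact ⟨N, vert_mul_mem_Plt hN v⟩
  | succ k =>
    obtain ⟨h1, h2⟩ := ha
    refine ⟨fun w hw => ?_, fun e => ?_⟩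
    · rw [← mul_assoc, vert_mul_vert]
      split_ifs
      · exact h1 w hw
      · exact ⟨0, by rw [zero_mul]; exact zero_mem _⟩
    · rw [← mul_assoc, ghost_mul_vert]
      split_ifs
      · exact h2 e
      · rw [zero_mul]; exact zero_mem _

theorem edge_mul_mem_Lk (f : G.E) {k : ℕ} {a : LeavittPathAlgebra K G} (ha : a ∈ Lk K G k) :
    edge K G f * a ∈ Lk K G (k + 1) := by
  refine ⟨fun w hw => ?_, fun e => ?_⟩
  · rw [← mul_assoc, vert_mul_edge, if_neg]
    · exact ⟨0, by rw [zero_mul]; exact zero_mem _⟩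
    · rintro rfl
      exact hw ⟨f, rfl⟩
  · rw [← mul_assoc, ghost_mul_edge]
    split_ifs
    · exact vert_mul_mem_Lk _ ha
    · rw [zero_mul]; exact zero_mem _

theorem exists_mem_Lk (x : LeavittPathAlgebra K G) : ∃ k, x ∈ Lk K G k := by
  let S : Submodule K (LeavittPathAlgebra K G) :=
    { carrier := {a | ∃ N, a ∈ Lk K G N}
      zero_mem' := ⟨0, zero_mem _⟩
      add_mem' := fun ⟨N, h⟩ ⟨M, h'⟩ => ⟨max N M,
        add_mem (Lk_mono (le_max_left _ _) h) (Lk_mono (le_max_right _ _) h')⟩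
      smul_mem' := fun c _ ⟨N, h⟩ => ⟨N, Submodule.smul_mem _ c h⟩ }
  refine mem_of_stable S ⟨0, 1, ?_⟩ ?_ ?_ ?_ x
  · rw [one_eq_sum]
    exact Submodule.sum_mem _ fun v _ => Pd_le_Plt Nat.one_pos (vert_mem_Pd v)
  · rintro v a ⟨k, h⟩
    exact ⟨k, vert_mul_mem_Lk v h⟩
  · rintro v a ⟨k, h⟩
    exact ⟨k + 1, edge_mul_mem_Lk v h⟩
  · rintro v a ⟨k, h⟩
    exact ⟨k, (Lk_le_succ k h).2 v⟩

theorem exists_mem_Lk_fin {ι : Type} [Finite ι] (x : ι → LeavittPathAlgebra K G) :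
    ∃ k, ∀ i, x i ∈ Lk K G k := by
  have := Fintype.ofFinite ι
  choose k hk using fun i => exists_mem_Lk (x i)
  exact ⟨Finset.univ.sup k, fun i => Lk_mono (Finset.le_sup (Finset.mem_univ i)) (hk i)⟩

theorem exists_mem_Plt_fin {ι : Type} [Finite ι] (x : ι → LeavittPathAlgebra K G)
    (h : ∀ i, x i ∈ Lk K G 0) : ∃ k, ∀ i, x i ∈ Plt K G k := by
  have := Fintype.ofFinite ι
  choose k hk using h
  exact ⟨Finset.univ.sup k, fun i => Plt_mono (Finset.le_sup (Finset.mem_univ i)) (hk i)⟩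

/-- An element killed by all sinks and all ghost edges vanishes. -/
theorem eq_zero_of_ghost {a : LeavittPathAlgebra K G}
    (h1 : ∀ v, ¬ G.IsRegular v → vert K G v * a = 0) (h2 : ∀ e, ghost K G e * a = 0) : a = 0 := by
  rw [eq_sum_vert_mul a]
  refine Finset.sum_eq_zero fun v _ => ?_
  by_cases hv : G.IsRegular v
  · rw [vert_eq_sum v hv, Finset.sum_mul]
    refine Finset.sum_eq_zero fun e _ => ?_
    rw [mul_assoc, h2, mul_zero]
  · exact h1 v hv

/-- Any nonzero finite tuple can be multiplied on the left into the span of ghost paths without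
becoming zero. -/
theorem exists_mul_mem {ι : Type} (a : ι → LeavittPathAlgebra K G) {k : ℕ}
    (ha : ∀ i, a i ∈ Lk K G k) (h0 : a ≠ 0) :
    ∃ b, (∀ i, b * a i ∈ Lk K G 0) ∧ ∃ i, b * a i ≠ 0 := by
  induction k generalizing a with
  | zero =>
    refine ⟨1, fun i => by rw [one_mul]; exact ha i, ?_⟩
    by_contra hcon
    push Not at hcon
    exact h0 (funext fun i => by simpa using hcon i)
  | succ k ih =>
    by_cases hs : ∃ v, ¬ G.IsRegular v ∧ ∃ i, vert K G v * a i ≠ 0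
    · obtain ⟨v, hv, hi⟩ := hs
      exact ⟨vert K G v, fun i => (ha i).1 v hv, hi⟩
    by_cases hg : ∃ e, ∃ i, ghost K G e * a i ≠ 0
    · obtain ⟨e, i, hi⟩ := hg
      obtain ⟨b, hb, j, hj⟩ := ih (fun i => ghost K G e * a i) (fun i => (ha i).2 e)
        (fun h => hi (congrFun h i))
      exact ⟨b * ghost K G e, fun i => by rw [mul_assoc]; exact hb i, j, by rwa [mul_assoc]⟩
    · push Not at hs hg
      exact absurd (funext fun i => eq_zero_of_ghost (fun v hv => hs v hv i) fun e => hg e i) h0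

end LeavittPathAlgebra

/-! ### Finitely generated submodules of free modules -/

/-- The module `⨁ᵤ R ε(u)`, realised inside the free module on `U`. -/
def cornerMod {R U : Type} [Ring R] (ε : U → R) : Submodule R (U → R) where
  carrier := {x | ∀ i, x i * ε i = x i}
  zero_mem' := fun i => by simp
  add_mem' := fun hx hy i => by simp only [Pi.add_apply, add_mul]; rw [hx i, hy i]
  smul_mem' := fun a x hx i => by
    simp only [Pi.smul_apply, smul_eq_mul, mul_assoc]; rw [hx i]

namespace LeavittPathAlgebra

variable {K : Type} [Field K] {G : FinGraph}

/-- A homogeneous relation among homogeneous vectors can be shortened from the left, by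
independence of the ghost edges, as long as all its coefficients have positive length. -/
theorem shorten_relation {ι κ : Type} [Fintype ι] (d : ι → ℕ) (D : ℕ)
    (X : ι → κ → LeavittPathAlgebra K G) (hX : ∀ i j, X i j ∈ Pd K G (d i)) (w : G.V) (k : ι)
    (t : ℕ) (p : ι → LeavittPathAlgebra K G) (hp : ∀ i, p i ∈ Pd K G (t + (D - d i)))
    (hp0 : ∀ i, D < d i → p i = 0) (hrel : ∀ j, ∑ i, p i * X i j = 0)
    (hk : p k * vert K G w ≠ 0) :
    ∃ q : ι → LeavittPathAlgebra K G, (∀ i, q i ∈ Pd K G (D - d i)) ∧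
      (∀ i, D < d i → q i = 0) ∧ (∀ j, ∑ i, q i * X i j = 0) ∧ q k * vert K G w ≠ 0 := by
  induction t generalizing p with
  | zero => exact ⟨p, fun i => by simpa using hp i, hp0, hrel, hk⟩
  | succ t ih =>
    have hy : ∀ i, ∃ y : G.E → LeavittPathAlgebra K G,
        (∀ e, y e ∈ Pd K G (t + (D - d i))) ∧ (∀ e, vert K G (G.s e) * y e = y e) ∧
        p i = ∑ e, ghost K G e * y e ∧ (D < d i → ∀ e, y e = 0) := by
      intro i
      by_cases hi : D < d i
      · exact ⟨0, fun e => zero_mem _, fun e => by simp, by simp [hp0 i hi], fun _ e => rfl⟩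
      · have h := hp i
        rw [Nat.add_right_comm] at h
        obtain ⟨y, h1, h2, h3⟩ := mem_Pd_succ' h
        exact ⟨y, h1, h2, h3, fun h => absurd h hi⟩
    choose y hy1 hy2 hy3 hy4 using hy
    have hrel' : ∀ e j, ∑ i, y i e * X i j = 0 := by
      intro e j
      refine ghost_independent (d := t + D) (y := fun e => ∑ i, y i e * X i j) ?_ ?_ ?_ e
      · intro e
        refine Submodule.sum_mem _ fun i _ => ?_
        by_cases hi : D < d i
        · rw [hy4 i hi, zero_mul]; exact zero_mem _
        · have := mul_mem_Pd (hy1 i e) (hX i j)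
          rwa [show t + (D - d i) + d i = t + D by omega] at this
      · intro e
        rw [Finset.mul_sum]
        exact Finset.sum_congr rfl fun i _ => by rw [← mul_assoc, hy2]
      · rw [← hrel j]
        simp only [Finset.mul_sum]
        rw [Finset.sum_comm]
        refine Finset.sum_congr rfl fun i _ => ?_
        rw [hy3 i, Finset.sum_mul]
        exact Finset.sum_congr rfl fun e _ => by rw [mul_assoc]
    have hke : ∃ e, y k e * vert K G w ≠ 0 := by
      by_contra hcon
      push Not at hcon
      apply hk
      rw [hy3 k, Finset.sum_mul]
      exact Finset.sum_eq_zero fun e _ => by rw [mul_assoc, hcon, mul_zero]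
    obtain ⟨e, he⟩ := hke
    exact ih (fun i => y i e) (fun i => hy1 i e) (fun i hi => hy4 i hi e) (hrel' e) he

/-- The module `⨁ᵢ L_K(G) w(i)`. -/
abbrev stdMod {ι : Type} (w : ι → G.V) :
    Submodule (LeavittPathAlgebra K G) (ι → LeavittPathAlgebra K G) :=
  cornerMod fun i => vert K G (w i)

theorem mem_stdMod {ι : Type} {w : ι → G.V} {x : ι → LeavittPathAlgebra K G} :
    x ∈ stdMod w ↔ ∀ i, x i * vert K G (w i) = x i := Iff.rfl

/-- A finite family of vectors whose only relations are the trivial ones spans a standard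
module. -/
theorem span_equiv_of_injective {ι κ : Type} [Fintype ι] (w : ι → G.V)
    (X : ι → κ → LeavittPathAlgebra K G) (hw : ∀ i, vert K G (w i) • X i = X i)
    (hinj : ∀ a ∈ stdMod (K := K) w, ∑ i, a i • X i = 0 → a = 0) :
    Nonempty (Submodule.span (LeavittPathAlgebra K G) (Set.range X) ≃ₗ[LeavittPathAlgebra K G]
      stdMod (K := K) w) := by
  classical
  let Φ : stdMod (K := K) w →ₗ[LeavittPathAlgebra K G] (κ → LeavittPathAlgebra K G) :=
    (Fintype.linearCombination (LeavittPathAlgebra K G) X) ∘ₗ (stdMod w).subtype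
  have hΦ : ∀ a, Φ a = ∑ i, a.1 i • X i := fun a => Fintype.linearCombination_apply _ _ _
  have hi : Function.Injective Φ := by
    intro a b hab
    rw [hΦ, hΦ] at hab
    refine Subtype.ext (sub_eq_zero.1 (hinj _ (sub_mem a.2 b.2) ?_))
    funext j
    have hj := congrFun hab j
    simp only [Finset.sum_apply, Pi.smul_apply, smul_eq_mul] at hj
    simp only [Finset.sum_apply, Pi.smul_apply, smul_eq_mul, Pi.sub_apply, sub_mul,
      Finset.sum_sub_distrib, Pi.zero_apply]
    rw [hj, sub_self]
  have hr : LinearMap.range Φ = Submodule.span (LeavittPathAlgebra K G) (Set.range X) := by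
    apply le_antisymm
    · rintro _ ⟨a, rfl⟩
      rw [hΦ]
      exact Submodule.sum_mem _ fun i _ =>
        Submodule.smul_mem _ _ (Submodule.subset_span ⟨i, rfl⟩)
    · rw [Submodule.span_le]
      rintro _ ⟨i, rfl⟩
      refine ⟨⟨Pi.single i (vert K G (w i)), fun j => ?_⟩, ?_⟩
      · by_cases h : j = i
        · subst h; simp [vert_mul_self]
        · simp [Pi.single_eq_of_ne h]
      · rw [hΦ, Finset.sum_eq_single i]
        · simp [hw]
        · intro j _ hj
          simp [Pi.single_eq_of_ne hj]
        · simp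
  exact ⟨((LinearEquiv.ofInjective Φ hi).trans (LinearEquiv.ofEq _ _ hr)).symm⟩

/-- A nontrivial relation between vectors of combinations of ghost paths lets one of the vectors
be replaced by one of smaller degree, without changing the span. -/
theorem exists_reduction {ι κ : Type} [Fintype ι] [DecidableEq ι] (w : ι → G.V) (d : ι → ℕ)
    (X : ι → κ → LeavittPathAlgebra K G) (hw : ∀ i, vert K G (w i) • X i = X i)
    (hX : ∀ i j, X i j ∈ Plt K G (d i + 1)) (a : ι → LeavittPathAlgebra K G)
    (ha : a ∈ stdMod (K := K) w) (hrel : ∑ i, a i • X i = 0) (h0 : a ≠ 0) :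
    ∃ (k : ι) (Y : κ → LeavittPathAlgebra K G), vert K G (w k) • Y = Y ∧
      (∀ j, Y j ∈ Plt K G (d k)) ∧
      Submodule.span (LeavittPathAlgebra K G) (Set.range (Function.update X k Y)) =
        Submodule.span (LeavittPathAlgebra K G) (Set.range X) := by
  classical
  obtain ⟨l, hl⟩ := exists_mem_Lk_fin a
  obtain ⟨b, hb, i₀, hi₀⟩ := exists_mul_mem a hl h0
  obtain ⟨N, hN⟩ := exists_mem_Plt_fin _ hb
  set p : ι → LeavittPathAlgebra K G := fun i => b * a i with hp
  have hpw : ∀ i, p i * vert K G (w i) = p i := fun i => by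
    simp only [hp, mul_assoc]; rw [ha i]
  have hprel : ∀ j, ∑ i, p i * X i j = 0 := by
    intro j
    have := congrFun hrel j
    simp only [Finset.sum_apply, Pi.smul_apply, smul_eq_mul, Pi.zero_apply] at this
    simp only [hp, mul_assoc]
    rw [← Finset.mul_sum, this, mul_zero]
  -- the total degree of the relation is the least `n` below, minus one
  have hex : ∃ n, ∀ i, p i ∈ Plt K G (n - d i) := by
    refine ⟨N + ∑ i, d i, fun i => Plt_mono ?_ (hN i)⟩
    have := Finset.single_le_sum (f := d) (fun _ _ => Nat.zero_le _) (Finset.mem_univ i)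
    omega
  have hspec := Nat.find_spec hex
  have hmin : ∀ m, m < Nat.find hex → ¬ ∀ i, p i ∈ Plt K G (m - d i) :=
    fun m hm => Nat.find_min hex hm
  generalize Nat.find hex = n at hspec hmin
  obtain _ | m := n
  · have := hspec i₀
    rw [Nat.zero_sub] at this
    exact absurd this hi₀
  -- `P` and `Xh` are the leading homogeneous parts of the coefficients and of the vectors
  set P : ι → LeavittPathAlgebra K G :=
    fun i => if d i ≤ m then comp (-((m - d i : ℕ) : ℤ)) (p i) else 0 with hP
  have hPle : ∀ i, P i ≠ 0 → d i ≤ m := by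
    intro i hi
    by_contra hcon
    exact hi (if_neg hcon)
  have hpi : ∀ i, d i ≤ m → p i ∈ Plt K G (m - d i + 1) := by
    intro i hi
    have := hspec i
    rwa [show m + 1 - d i = m - d i + 1 by omega] at this
  have hpi0 : ∀ i, ¬ d i ≤ m → p i = 0 := by
    intro i hi
    have := hspec i
    rw [show m + 1 - d i = 0 by omega] at this
    exact this
  have hPmem : ∀ i, d i ≤ m → P i ∈ Pd K G (m - d i) := by
    intro i hi
    simp only [hP, if_pos hi]
    exact comp_mem_Pd (hpi i hi)
  set Xh : ι → κ → LeavittPathAlgebra K G := fun i j => comp (-(d i : ℤ)) (X i j) with hXh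
  have hXhmem : ∀ i j, Xh i j ∈ Pd K G (d i) := fun i j => comp_mem_Pd (hX i j)
  have hPrel : ∀ j, ∑ i, P i * Xh i j = 0 := by
    intro j
    have := congrArg (comp (-(m : ℤ))) (hprel j)
    rw [map_sum, map_zero] at this
    rw [← this]
    refine Finset.sum_congr rfl fun i _ => ?_
    by_cases hi : d i ≤ m
    · have h := comp_mul (hpi i hi) (hX i j)
      rw [show m - d i + d i = m by omega] at h
      rw [h]
      simp only [hP, if_pos hi, hXh]
    · simp only [hP, if_neg hi, hpi0 i hi, zero_mul, map_zero]
  have hPw : ∀ i, P i * vert K G (w i) = P i := by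
    intro i
    by_cases hi : d i ≤ m
    · simp only [hP, if_pos hi]
      have h := comp_mul (b := 0) (hpi i hi) (Pd_le_Plt Nat.one_pos (vert_mem_Pd (w i)))
      rw [comp_of_mem_Pd (vert_mem_Pd _), hpw i] at h
      exact h.symm
    · simp [hP, if_neg hi]
  have hPne : ∃ i, P i ≠ 0 := by
    by_contra hcon
    push Not at hcon
    refine hmin m (Nat.lt_succ_self m) fun i => ?_
    by_cases hi : d i ≤ m
    · have h := sub_comp_mem (hpi i hi)
      have h' := hcon i
      simp only [hP, if_pos hi] at h'
      rwa [h', sub_zero] at h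
    · rw [hpi0 i hi]; exact zero_mem _
  -- a vector of maximal degree among those involved in the leading relation is the one replaced;
  -- after shortening, its coefficient is a scalar
  obtain ⟨k, hk, hmax⟩ := Finset.exists_max_image (Finset.univ.filter fun i => P i ≠ 0) d
    (by obtain ⟨i, hi⟩ := hPne; exact ⟨i, by simpa using hi⟩)
  have hk : P k ≠ 0 := (Finset.mem_filter.1 hk).2
  have hmax : ∀ i, P i ≠ 0 → d i ≤ d k := fun i hi => hmax i (by simpa using hi)
  obtain ⟨q, hq, hq0, hqrel, hqk⟩ := shorten_relation d (d k) Xh hXhmem (w k) k (m - d k) P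
    (by
      intro i
      by_cases hi : P i = 0
      · rw [hi]; exact zero_mem _
      · have h1 := hmax i hi
        have h2 := hPle k hk
        have h3 := hPmem i (hPle i hi)
        rwa [show m - d i = m - d k + (d k - d i) by omega] at h3)
    (by
      intro i hi
      by_contra hcon
      have := hmax i hcon
      omega) hPrel (by rwa [hPw])
  have hqk0 := hq k
  rw [Nat.sub_self] at hqk0
  obtain ⟨c, hc⟩ := Pd_zero_mul_vert hqk0 (w k)
  have hc0 : c ≠ 0 := by
    rintro rfl
    rw [zero_smul] at hc
    exact hqk hc
  set r : ι → LeavittPathAlgebra K G := fun i => c⁻¹ • (vert K G (w k) * q i) with hr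
  have hrk : r k • X k = X k := by
    rw [← hw k, smul_smul]
    simp only [hr]
    rw [smul_mul_assoc, mul_assoc, hc, mul_smul_comm, vert_mul_self, smul_smul,
      inv_mul_cancel₀ hc0, one_smul, hw]
  refine ⟨k, ∑ i, r i • X i, ?_, ?_, ?_⟩
  · rw [Finset.smul_sum]
    refine Finset.sum_congr rfl fun i _ => ?_
    rw [smul_smul]
    simp only [hr]
    rw [mul_smul_comm, ← mul_assoc, vert_mul_self]
  · intro j
    have h1 : (∑ i, r i • X i) j = ∑ i, r i * (X i j - Xh i j) := by
      simp only [mul_sub, Finset.sum_sub_distrib, Finset.sum_apply, Pi.smul_apply, smul_eq_mul]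
      have : ∑ i, r i * Xh i j = 0 := by
        simp only [hr, smul_mul_assoc, mul_assoc]
        rw [← Finset.smul_sum, ← Finset.mul_sum, hqrel, mul_zero, smul_zero]
      rw [this, sub_zero]
    rw [h1]
    refine Submodule.sum_mem _ fun i _ => ?_
    by_cases hi : d k < d i
    · simp only [hr, hq0 i hi, mul_zero, smul_zero, zero_mul]
      exact zero_mem _
    · have h2 := Pd_mul_Plt (hq i) (sub_comp_mem (hX i j))
      rw [show d k - d i + d i = d k by omega] at h2
      simp only [hr, smul_mul_assoc, mul_assoc]
      exact Submodule.smul_mem _ _ (vert_mul_mem_Plt h2 _)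
  · have hY : ∑ i, r i • X i = X k + ∑ i ∈ Finset.univ.erase k, r i • X i := by
      rw [← Finset.add_sum_erase _ _ (Finset.mem_univ k), hrk]
    apply le_antisymm
    · rw [Submodule.span_le]
      rintro _ ⟨i, rfl⟩
      by_cases hi : i = k
      · subst hi
        rw [Function.update_self]
        exact Submodule.sum_mem _ fun i _ =>
          Submodule.smul_mem _ _ (Submodule.subset_span ⟨i, rfl⟩)
      · rw [Function.update_of_ne hi]
        exact Submodule.subset_span ⟨i, rfl⟩
    · rw [Submodule.span_le]
      have hother : ∀ i, i ≠ k → X i ∈ Submodule.span (LeavittPathAlgebra K G)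
          (Set.range (Function.update X k (∑ i, r i • X i))) := fun i hi =>
        Submodule.subset_span ⟨i, Function.update_of_ne hi _ _⟩
      rintro _ ⟨i, rfl⟩
      by_cases hi : i = k
      · subst hi
        have h : (∑ j, r j • X j) - ∑ j ∈ Finset.univ.erase i, r j • X j ∈
            Submodule.span (LeavittPathAlgebra K G)
              (Set.range (Function.update X i (∑ j, r j • X j))) :=
          sub_mem (Submodule.subset_span ⟨i, Function.update_self _ _ _⟩)
            (Submodule.sum_mem _ fun j hj =>
              Submodule.smul_mem _ _ (hother j (Finset.ne_of_mem_erase hj)))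
        rwa [← eq_sub_of_add_eq hY.symm] at h
      · exact hother i hi

/-- A family of vectors of combinations of ghost paths spans a standard module: as long as there
are nontrivial relations, a member is replaced by one of smaller degree, and zero members are
discarded. The sum of the `ε i + 1` decreases. -/
theorem span_equiv_std_aux {κ : Type} (n : ℕ) : ∀ (ι : Type) [Fintype ι] (w : ι → G.V)
    (ε : ι → ℕ) (X : ι → κ → LeavittPathAlgebra K G), ∑ i, (ε i + 1) < n →
    (∀ i, vert K G (w i) • X i = X i) → (∀ i j, X i j ∈ Plt K G (ε i)) →
    ∃ (ι' : Type) (_ : Fintype ι') (w' : ι' → G.V),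
      Nonempty (Submodule.span (LeavittPathAlgebra K G) (Set.range X) ≃ₗ[LeavittPathAlgebra K G]
        stdMod (K := K) w') := by
  classical
  induction n with
  | zero => intro ι _ w ε X h; omega
  | succ n ih =>
    intro ι _ w ε X hn hw hX
    by_cases hε : ∃ i, ε i = 0
    · obtain ⟨i₀, hi₀⟩ := hε
      have hX0 : X i₀ = 0 := by
        funext j
        have := hX i₀ j
        rw [hi₀] at this
        exact this
      have hspan : Submodule.span (LeavittPathAlgebra K G) (Set.range X) =
          Submodule.span (LeavittPathAlgebra K G)
            (Set.range fun i : {i // i ≠ i₀} => X i.1) := by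
        apply le_antisymm
        · rw [Submodule.span_le]
          rintro _ ⟨i, rfl⟩
          by_cases hi : i = i₀
          · rw [hi, hX0]; exact zero_mem _
          · exact Submodule.subset_span ⟨⟨i, hi⟩, rfl⟩
        · apply Submodule.span_mono
          rintro _ ⟨i, rfl⟩
          exact ⟨i.1, rfl⟩
      rw [hspan]
      refine ih {i // i ≠ i₀} (fun i => w i.1) (fun i => ε i.1) (fun i => X i.1) ?_
        (fun i => hw i.1) (fun i => hX i.1)
      rw [Fintype.sum_eq_add_sum_subtype_ne _ i₀] at hn
      omega
    · push Not at hε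
      have hd : ∀ i, ε i - 1 + 1 = ε i := fun i => Nat.succ_pred_eq_of_ne_zero (hε i)
      by_cases hinj : ∀ a ∈ stdMod (K := K) w, ∑ i, a i • X i = 0 → a = 0
      · exact ⟨ι, inferInstance, w, span_equiv_of_injective w X hw hinj⟩
      · push Not at hinj
        obtain ⟨a, ha, hrel, h0⟩ := hinj
        obtain ⟨k, Y, hwY, hY, hspan⟩ := exists_reduction w (fun i => ε i - 1) X hw
          (fun i j => by simp only [hd]; exact hX i j) a ha hrel h0
        rw [← hspan]
        refine ih ι w (Function.update ε k (ε k - 1)) _ ?_ ?_ ?_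
        · refine lt_of_lt_of_le ?_ (Nat.lt_succ_iff.1 hn)
          refine Finset.sum_lt_sum (fun i _ => ?_) ⟨k, Finset.mem_univ k, ?_⟩
          · by_cases hi : i = k
            · subst hi; simp
            · rw [Function.update_of_ne hi]
          · have := hε k
            rw [Function.update_self]; omega
        · intro i
          by_cases hi : i = k
          · subst hi; simpa using hwY
          · simpa [Function.update_of_ne hi] using hw i
        · intro i j
          by_cases hi : i = k
          · subst hi; simpa using hY j
          · simpa [Function.update_of_ne hi] using hX i j

/-- Every finitely generated submodule of a free module is standard. A generating family is replaced
by its products with the sinks and the ghost edges, which by the Cuntz-Krieger relation span the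
same submodule, until its entries become combinations of ghost paths; then each member is split
into its components at the vertices. -/
theorem span_equiv_std {κ : Type} [Finite κ] (k : ℕ) : ∀ (ι : Type) [Fintype ι]
    (X : ι → κ → LeavittPathAlgebra K G), (∀ i j, X i j ∈ Lk K G k) →
    ∃ (ι' : Type) (_ : Fintype ι') (w' : ι' → G.V),
      Nonempty (Submodule.span (LeavittPathAlgebra K G) (Set.range X) ≃ₗ[LeavittPathAlgebra K G]
        stdMod (K := K) w') := by
  induction k with
  | zero =>
    intro ι _ X hX
    have hfin : ∀ i, ∃ N, ∀ j, X i j ∈ Plt K G N := fun i => exists_mem_Plt_fin _ (hX i)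
    choose N hN using hfin
    have hspan : Submodule.span (LeavittPathAlgebra K G) (Set.range X) =
        Submodule.span (LeavittPathAlgebra K G)
          (Set.range fun p : ι × G.V => vert K G p.2 • X p.1) := by
      apply le_antisymm
      · rw [Submodule.span_le]
        rintro _ ⟨i, rfl⟩
        have : X i = ∑ v : G.V, vert K G v • X i := by
          rw [← Finset.sum_smul, ← one_eq_sum, one_smul]
        rw [this]
        exact Submodule.sum_mem _ fun v _ => Submodule.subset_span ⟨(i, v), rfl⟩
      · rw [Submodule.span_le]
        rintro _ ⟨p, rfl⟩
        exact Submodule.smul_mem _ _ (Submodule.subset_span ⟨p.1, rfl⟩)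
    rw [hspan]
    refine span_equiv_std_aux _ (ι × G.V) (fun p => p.2) (fun p => N p.1) _ (Nat.lt_succ_self _)
      (fun p => ?_) (fun p j => ?_)
    · rw [smul_smul, vert_mul_self]
    · exact vert_mul_mem_Plt (hN p.1 j) _
  | succ k ih =>
    intro ι _ X hX
    classical
    have hspan : Submodule.span (LeavittPathAlgebra K G) (Set.range X) =
        Submodule.span (LeavittPathAlgebra K G)
          (Set.range (Sum.elim (fun p : ι × {v : G.V // ¬ G.IsRegular v} => vert K G p.2.1 • X p.1)
            (fun p : ι × G.E => ghost K G p.2 • X p.1))) := by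
      apply le_antisymm
      · rw [Submodule.span_le]
        rintro _ ⟨i, rfl⟩
        have : X i = ∑ v : G.V, vert K G v • X i := by
          rw [← Finset.sum_smul, ← one_eq_sum, one_smul]
        rw [this]
        refine Submodule.sum_mem _ fun v _ => ?_
        by_cases hv : G.IsRegular v
        · rw [vert_eq_sum v hv, Finset.sum_smul]
          refine Submodule.sum_mem _ fun e _ => ?_
          rw [mul_smul]
          exact Submodule.smul_mem _ _ (Submodule.subset_span ⟨Sum.inr (i, e), rfl⟩)
        · exact Submodule.subset_span ⟨Sum.inl (i, ⟨v, hv⟩), rfl⟩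
      · rw [Submodule.span_le]
        rintro _ ⟨p | p, rfl⟩
        · exact Submodule.smul_mem _ _ (Submodule.subset_span ⟨p.1, rfl⟩)
        · exact Submodule.smul_mem _ _ (Submodule.subset_span ⟨p.1, rfl⟩)
    rw [hspan]
    refine ih _ _ ?_
    rintro (p | p) j
    · exact Lk_mono (Nat.zero_le k) ((hX p.1 j).1 p.2.1 p.2.2)
    · exact (hX p.1 j).2 p.2

/-- Every finitely generated projective module over `L_K(G)` is isomorphic to a finite direct sum
of modules `L_K(G) v`. -/
theorem exists_equiv_stdMod (Q : Type) [AddCommGroup Q] [Module (LeavittPathAlgebra K G) Q]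
    [Module.Finite (LeavittPathAlgebra K G) Q] [Module.Projective (LeavittPathAlgebra K G) Q] :
    ∃ (ι : Type) (_ : Fintype ι) (w : ι → G.V),
      Nonempty (Q ≃ₗ[LeavittPathAlgebra K G] stdMod (K := K) w) := by
  obtain ⟨n, f, hf⟩ := Module.Finite.exists_fin' (LeavittPathAlgebra K G) Q
  obtain ⟨g, hg⟩ := Module.projective_lifting_property f LinearMap.id hf
  have hinj : Function.Injective g := fun x y h => by
    have := congrArg f h
    rw [← LinearMap.comp_apply, ← LinearMap.comp_apply, hg] at this
    simpa using this
  let X : Fin n → Fin n → LeavittPathAlgebra K G := fun i => g (f (Pi.single i 1))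
  have hr : LinearMap.range g = Submodule.span (LeavittPathAlgebra K G) (Set.range X) := by
    apply le_antisymm
    · rintro _ ⟨x, rfl⟩
      obtain ⟨a, rfl⟩ := hf x
      have : a = ∑ i, a i • (Pi.single i 1 : Fin n → LeavittPathAlgebra K G) := by
        funext j
        simp [Finset.sum_apply, Pi.single_apply]
      rw [this, map_sum, map_sum]
      refine Submodule.sum_mem _ fun i _ => ?_
      rw [map_smul, map_smul]
      exact Submodule.smul_mem _ _ (Submodule.subset_span ⟨i, rfl⟩)
    · rw [Submodule.span_le]
      rintro _ ⟨i, rfl⟩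
      exact ⟨_, rfl⟩
  obtain ⟨k, hk⟩ := exists_mem_Lk_fin fun p : Fin n × Fin n => X p.1 p.2
  obtain ⟨ι, hι, w, ⟨e⟩⟩ := span_equiv_std k (Fin n) X fun i j => hk (i, j)
  exact ⟨ι, hι, w, ⟨((LinearEquiv.ofInjective g hinj).trans (LinearEquiv.ofEq _ _ hr)).trans e⟩⟩

end LeavittPathAlgebra

/-! ### Endomorphisms of a direct sum of modules `R ε(u)` -/

section Corner

variable {K R U : Type} [Field K] [Ring R] [Algebra K R] {ε : U → R}

/-- A family of idempotents (no orthogonality is required). -/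
def Idem (ε : U → R) : Prop := ∀ u, ε u * ε u = ε u

/-- The endomorphism ring of `⨁ᵤ R ε(u)`. -/
abbrev CornerEnd {R U : Type} [Ring R] (ε : U → R) : Type := Module.End R (cornerMod ε)

noncomputable instance cornerEndRing {R U : Type} [Ring R] (ε : U → R) : Ring (CornerEnd ε) :=
  Module.End.instRing

theorem cornerEnd_eq_zero {c : K} (hc : c ≠ 0) {f : CornerEnd ε} (h : c • f = 0) : f = 0 := by
  rw [← one_smul K f, ← inv_mul_cancel₀ hc, mul_smul, h, smul_zero]

theorem elt_ext {f g : CornerEnd ε} (h : ∀ x, (f x).1 = (g x).1) : f = g :=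
  LinearMap.ext fun x => Subtype.ext (h x)

variable [DecidableEq U]

theorem single_mem_cornerMod (hε : Idem ε) (u : U) (a : R) :
    Pi.single u (a * ε u) ∈ cornerMod ε := by
  intro i
  by_cases h : i = u
  · subst h; simp only [Pi.single_eq_same, mul_assoc]; rw [hε]
  · simp [Pi.single_eq_of_ne h]

/-- The endomorphism whose only nonzero entry is `ε(u) a ε(u')`, in position `(u, u')`. -/
def elt (hε : Idem ε) (u u' : U) (a : R) : CornerEnd ε where
  toFun x := ⟨Pi.single u' (x.1 u * a * ε u'), single_mem_cornerMod hε u' _⟩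
  map_add' x y := by
    apply Subtype.ext
    simp only [Submodule.coe_add, Pi.add_apply, add_mul, Pi.single_add]
  map_smul' c x := by
    apply Subtype.ext
    funext i
    by_cases h : i = u'
    · subst h; simp [mul_assoc]
    · simp [Pi.single_eq_of_ne h]

theorem elt_apply (hε : Idem ε) (u u' : U) (a : R) (x : cornerMod ε) :
    (elt hε u u' a x).1 = Pi.single u' (x.1 u * a * ε u') := rfl

theorem elt_mul (hε : Idem ε) (u u₁ u' : U) (a b : R) :
    elt hε u₁ u' b * elt hε u u₁ a = elt hε u u' (a * ε u₁ * b) := by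
  refine elt_ext fun x => ?_
  rw [Module.End.mul_apply, elt_apply, elt_apply, elt_apply, Pi.single_eq_same]
  simp only [mul_assoc]

theorem elt_mul_ne (hε : Idem ε) (u u₁ u₂ u' : U) (a b : R) (h : u₂ ≠ u₁) :
    elt hε u₂ u' b * elt hε u u₁ a = 0 := by
  refine elt_ext fun x => ?_
  rw [Module.End.mul_apply, elt_apply, elt_apply, Pi.single_eq_of_ne h, zero_mul, zero_mul]
  simp

/-- `elt` only depends on the entry `ε(u) a ε(u')`. -/
theorem elt_congr (hε : Idem ε) (u u' : U) {a b : R} (h : ε u * a * ε u' = ε u * b * ε u') :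
    elt hε u u' a = elt hε u u' b := by
  refine elt_ext fun x => ?_
  rw [elt_apply, elt_apply, ← x.2 u]
  congr 1
  simpa only [mul_assoc] using congrArg (x.1 u * ·) h

theorem elt_add (hε : Idem ε) (u u' : U) (a b : R) :
    elt hε u u' (a + b) = elt hε u u' a + elt hε u u' b := by
  refine elt_ext fun x => ?_
  rw [LinearMap.add_apply, Submodule.coe_add, elt_apply, elt_apply, elt_apply, mul_add, add_mul,
    Pi.single_add]

theorem elt_zero (hε : Idem ε) (u u' : U) : elt hε u u' 0 = 0 := by
  refine elt_ext fun x => ?_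
  rw [elt_apply]
  simp

theorem elt_sum (hε : Idem ε) (u u' : U) {ι : Type} (s : Finset ι) (a : ι → R) :
    elt hε u u' (∑ i ∈ s, a i) = ∑ i ∈ s, elt hε u u' (a i) := by
  classical
  induction s using Finset.induction_on with
  | empty => exact elt_zero hε u u'
  | insert i s hi ih => rw [Finset.sum_insert hi, Finset.sum_insert hi, elt_add, ih]

theorem elt_smul (hε : Idem ε) (u u' : U) (c : K) (a : R) :
    elt hε u u' (c • a) = c • elt hε u u' a := by
  refine elt_ext fun x => ?_
  rw [LinearMap.smul_apply, elt_apply]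
  change _ = c • (elt hε u u' a x).1
  rw [elt_apply, mul_smul_comm, smul_mul_assoc, Pi.single_smul']

/-- The generator of the summand `R ε(u)`. -/
def basisVec (hε : Idem ε) (u : U) : cornerMod ε :=
  ⟨Pi.single u (1 * ε u), single_mem_cornerMod hε u 1⟩

/-- The entry in position `(u, u')` of an endomorphism. -/
def entry (hε : Idem ε) (f : CornerEnd ε) (u u' : U) : R :=
  (f (basisVec hε u)).1 u'

theorem entry_add (hε : Idem ε) (f g : CornerEnd ε) (u u' : U) :
    entry hε (g + f) u u' = entry hε g u u' + entry hε f u u' := rfl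

theorem entry_zero (hε : Idem ε) (u u' : U) :
    entry hε (0 : CornerEnd ε) u u' = 0 := rfl

theorem entry_smul (hε : Idem ε) (c : K) (f : CornerEnd ε) (u u' : U) :
    entry hε (c • f) u u' = c • entry hε f u u' := rfl

theorem entry_elt (hε : Idem ε) (u u' v v' : U) (a : R) :
    entry hε (elt hε u u' a) v v' = if u = v ∧ u' = v' then ε u * a * ε u' else 0 := by
  rw [entry, elt_apply]
  simp only [basisVec, one_mul, Pi.single_apply]
  split_ifs <;> simp_all

variable [Fintype U]

theorem one_eq_sum_elt (hε : Idem ε) : (1 : CornerEnd ε) = ∑ u, elt hε u u 1 := by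
  refine elt_ext fun x => ?_
  rw [LinearMap.sum_apply, Submodule.coe_sum]
  funext i
  rw [Finset.sum_apply]
  simp only [elt_apply, mul_one, Pi.single_apply, Finset.sum_ite_eq, Finset.mem_univ, if_true]
  exact (x.2 i).symm

theorem eq_sum_basisVec (hε : Idem ε) (x : cornerMod ε) : x = ∑ u, x.1 u • basisVec hε u := by
  apply Subtype.ext
  rw [Submodule.coe_sum]
  funext i
  rw [Finset.sum_apply]
  simp only [Submodule.coe_smul, Pi.smul_apply, basisVec, one_mul, smul_eq_mul, Pi.single_apply,
    mul_ite, mul_zero, Finset.sum_ite_eq, Finset.mem_univ, if_true]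
  exact (x.2 i).symm

theorem apply_eq_sum_entry (hε : Idem ε) (f : CornerEnd ε) (x : cornerMod ε)
    (u' : U) : (f x).1 u' = ∑ u, x.1 u * entry hε f u u' := by
  conv_lhs => rw [eq_sum_basisVec hε x]
  rw [map_sum, Submodule.coe_sum, Finset.sum_apply]
  refine Finset.sum_congr rfl fun u _ => ?_
  rw [map_smul]
  rfl

theorem eq_sum_elt (hε : Idem ε) (f : CornerEnd ε) :
    f = ∑ u, ∑ u', elt hε u u' (entry hε f u u') := by
  refine elt_ext fun x => ?_
  funext i
  rw [apply_eq_sum_entry hε, LinearMap.sum_apply, Submodule.coe_sum, Finset.sum_apply]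
  refine Finset.sum_congr rfl fun u _ => ?_
  rw [LinearMap.sum_apply, Submodule.coe_sum, Finset.sum_apply]
  simp only [elt_apply, Pi.single_apply, Finset.sum_ite_eq, Finset.mem_univ, if_true, mul_assoc]
  rw [entry, (f (basisVec hε u)).2 i]

theorem entry_mul (hε : Idem ε) (f g : CornerEnd ε) (u u' : U) :
    entry hε (g * f) u u' = ∑ u₁, entry hε f u u₁ * entry hε g u₁ u' := by
  change (g (f (basisVec hε u))).1 u' = _
  rw [apply_eq_sum_entry hε]
  rfl

theorem eq_zero_of_entry (hε : Idem ε) {f : CornerEnd ε}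
    (h : ∀ u u', entry hε f u u' = 0) : f = 0 := by
  rw [eq_sum_elt hε f]
  simp [h, elt_zero]

namespace LeavittPathAlgebra

/-- A Leavitt family in the endomorphism ring of `⨁ᵤ R ε(u)`. As composition of endomorphisms
reverses the multiplication of entries, an edge `h` acts through the entry `cg h` in position
`(r h, s h)`, and the ghost edge through `ce h` in position `(s h, r h)`. -/
def endFamily (K : Type) [Field K] [Algebra K R] {H : FinGraph} {ε : H.V → R} (hε : Idem ε)
    (ce cg : H.E → R) (hcg : ∀ h, cg h * ε (H.s h) = cg h) (hce : ∀ h, ce h * ε (H.r h) = ce h)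
    (horth : ∀ h h', H.s h = H.s h' → cg h * ce h' = if h = h' then ε (H.r h) else 0)
    (hck : ∀ u, H.IsRegular u → ∑ h ∈ Finset.univ.filter (fun h : H.E => H.s h = u),
      ce h * cg h = ε u) :
    Family K H (CornerEnd ε) where
  v u := elt hε u u 1
  e h := elt hε (H.r h) (H.s h) (cg h)
  g h := elt hε (H.s h) (H.r h) (ce h)
  vv a b := by
    split_ifs with h
    · subst h
      rw [elt_mul]
      exact elt_congr hε _ _ (by rw [mul_one, one_mul, mul_one, hε, hε])
    · exact elt_mul_ne hε _ _ _ _ _ _ h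
  se h := by
    rw [elt_mul]
    exact elt_congr hε _ _ (by rw [mul_one, hcg])
  er h := by
    rw [elt_mul]
    exact elt_congr hε _ _ (by simp only [one_mul, ← mul_assoc]; rw [hε])
  rg h := by
    rw [elt_mul]
    exact elt_congr hε _ _ (by rw [mul_one, hce])
  gs h := by
    rw [elt_mul]
    exact elt_congr hε _ _ (by simp only [one_mul, ← mul_assoc]; rw [hε])
  ge h h' := by
    by_cases hs : H.s h = H.s h'
    · rw [hs, elt_mul, hcg, horth _ _ hs.symm]
      by_cases hh : h = h'
      · subst hh
        rw [if_pos rfl, if_pos rfl]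
        exact elt_congr hε _ _ (by rw [mul_one, hε, hε])
      · rw [if_neg hh, if_neg (Ne.symm hh), elt_zero]
    · rw [if_neg (fun hh => hs (by rw [hh]))]
      exact elt_mul_ne hε _ _ _ _ _ _ hs
  ck u hu := by
    have : ∀ h ∈ Finset.univ.filter (fun h : H.E => H.s h = u),
        elt hε (H.r h) (H.s h) (cg h) * elt hε (H.s h) (H.r h) (ce h) =
          elt hε u u (ce h * cg h) := by
      intro h hh
      obtain rfl := (Finset.mem_filter.1 hh).2
      rw [elt_mul, hce]
    rw [Finset.sum_congr rfl this, ← elt_sum, hck u hu]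
    exact elt_congr hε _ _ (by rw [mul_one, hε, hε])
  one := one_eq_sum_elt hε

end LeavittPathAlgebra

end Corner

/-! ### Hair extensions as endomorphism rings -/

/-- A presentation of the graph `H` as a hair extension of a full subgraph of `E`. Every vertex of
`H` has a height, its distance to the root of its hair; the vertices of height zero are those of the
subgraph. Every vertex of `H` is sent by `root` to the vertex of `E` at the root of its hair. The
edges `h` of `H` with `kind h = some e` are the edges of the subgraph, and those with
`kind h = none` are the edges of the hairs. -/
structure HairPres (H E : FinGraph) where
  root : H.V → E.V
  height : H.V → ℕ
  kind : H.E → Option E.E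
  core_s : ∀ h e, kind h = some e → E.s e = root (H.s h)
  core_r : ∀ h e, kind h = some e → E.r e = root (H.r h)
  core_height_s : ∀ h e, kind h = some e → height (H.s h) = 0
  core_height_r : ∀ h e, kind h = some e → height (H.r h) = 0
  core_inj : ∀ h h' e, kind h = some e → kind h' = some e → h = h'
  core_full : ∀ u e, height u = 0 → E.s e = root u → ∃ h, H.s h = u ∧ kind h = some e
  hair_root : ∀ h, kind h = none → root (H.r h) = root (H.s h)
  hair_height : ∀ h, kind h = none → height (H.s h) = height (H.r h) + 1
  hair_unique : ∀ h h', kind h = none → H.s h' = H.s h → h' = h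
  hair_full : ∀ u, height u ≠ 0 → ∃ h, H.s h = u ∧ kind h = none
  root_inj : ∀ u u', height u = 0 → height u' = 0 → root u = root u' → u = u'

namespace LeavittPathAlgebra

variable {K : Type} [Field K] {H E : FinGraph} (P : HairPres H E)

/-- The idempotents attached to the vertices of the hair extension. -/
noncomputable abbrev hairIdem (K : Type) [Field K] (u : H.V) : LeavittPathAlgebra K E :=
  vert K E (P.root u)

theorem idem_hairIdem : Idem (hairIdem P K) := fun _ => vert_mul_self _

/-- Edges of the subgraph act through edges of `E`, and edges of a hair through its root. -/
noncomputable def hairEdge (K : Type) [Field K] (h : H.E) : LeavittPathAlgebra K E :=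
  (P.kind h).elim (vert K E (P.root (H.s h))) (edge K E)

/-- The adjoint of `hairEdge`. -/
noncomputable def hairGhost (K : Type) [Field K] (h : H.E) : LeavittPathAlgebra K E :=
  (P.kind h).elim (vert K E (P.root (H.s h))) (ghost K E)

variable {P}

theorem hairEdge_some {h : H.E} {e : E.E} (hk : P.kind h = some e) :
    hairEdge P K h = edge K E e := by rw [hairEdge, hk]; rfl

theorem hairGhost_some {h : H.E} {e : E.E} (hk : P.kind h = some e) :
    hairGhost P K h = ghost K E e := by rw [hairGhost, hk]; rfl

theorem hairEdge_none {h : H.E} (hk : P.kind h = none) :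
    hairEdge P K h = vert K E (P.root (H.s h)) := by rw [hairEdge, hk]; rfl

theorem hairGhost_none {h : H.E} (hk : P.kind h = none) :
    hairGhost P K h = vert K E (P.root (H.s h)) := by rw [hairGhost, hk]; rfl

variable (P)

theorem hairGhost_mul (h : H.E) :
    hairGhost P K h * hairIdem P K (H.s h) = hairGhost P K h := by
  cases hk : P.kind h with
  | none => rw [hairGhost_none hk]; exact vert_mul_self _
  | some e => rw [hairGhost_some hk, hairIdem, ← P.core_s h e hk, ghost_mul_vert, if_pos rfl]

theorem hairEdge_mul (h : H.E) :
    hairEdge P K h * hairIdem P K (H.r h) = hairEdge P K h := by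
  cases hk : P.kind h with
  | none => rw [hairEdge_none hk, hairIdem, P.hair_root h hk]; exact vert_mul_self _
  | some e => rw [hairEdge_some hk, hairIdem, ← P.core_r h e hk, edge_mul_vert, if_pos rfl]

theorem hair_orth (h h' : H.E) (hs : H.s h = H.s h') :
    hairGhost P K h * hairEdge P K h' = if h = h' then hairIdem P K (H.r h) else 0 := by
  cases hk : P.kind h with
  | none =>
    obtain rfl := P.hair_unique h h' hk hs.symm
    rw [if_pos rfl, hairGhost_none hk, hairEdge_none hk, hairIdem, P.hair_root _ hk]
    exact vert_mul_self _
  | some e =>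
    cases hk' : P.kind h' with
    | none =>
      obtain rfl := P.hair_unique h' h hk' hs
      rw [hk'] at hk
      cases hk
    | some e' =>
      rw [hairGhost_some hk, hairEdge_some hk', ghost_mul_edge]
      by_cases he : e = e'
      · subst he
        rw [if_pos rfl, if_pos (P.core_inj h h' e hk hk'), P.core_r h e hk]
      · rw [if_neg he, if_neg]
        rintro rfl
        exact he (Option.some.inj (hk.symm.trans hk'))

theorem hair_ck (u : H.V) (hu : H.IsRegular u) :
    ∑ h ∈ Finset.univ.filter (fun h : H.E => H.s h = u), hairEdge P K h * hairGhost P K h =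
      hairIdem P K u := by
  by_cases h0 : P.height u = 0
  · have hsome : ∀ h, H.s h = u → ∃ e, P.kind h = some e := by
      rintro h rfl
      cases hk : P.kind h with
      | none => rw [P.hair_height h hk] at h0; omega
      | some e => exact ⟨e, rfl⟩
    have hreg : E.IsRegular (P.root u) := by
      obtain ⟨h, rfl⟩ := hu
      obtain ⟨e, he⟩ := hsome h rfl
      exact ⟨e, P.core_s h e he⟩
    rw [hairIdem, vert_eq_sum _ hreg]
    have hc : ∀ h, H.s h = u → ∃ e, E.s e = P.root u ∧ P.kind h = some e := by
      rintro h rfl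
      obtain ⟨e, he⟩ := hsome h rfl
      exact ⟨e, P.core_s h e he, he⟩
    refine Finset.sum_bij (fun h hh => (hc h (Finset.mem_filter.1 hh).2).choose) ?_ ?_ ?_ ?_
    · intro h hh
      exact Finset.mem_filter.2 ⟨Finset.mem_univ _,
        (hc h (Finset.mem_filter.1 hh).2).choose_spec.1⟩
    · intro h hh h' hh' he
      have h1 := (hc h (Finset.mem_filter.1 hh).2).choose_spec.2
      have h2 := (hc h' (Finset.mem_filter.1 hh').2).choose_spec.2
      rw [← he] at h2
      exact P.core_inj h h' _ h1 h2
    · intro e he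
      obtain ⟨h, hs, hk⟩ := P.core_full u e h0 (Finset.mem_filter.1 he).2
      refine ⟨h, Finset.mem_filter.2 ⟨Finset.mem_univ _, hs⟩, ?_⟩
      exact Option.some.inj ((hc h hs).choose_spec.2.symm.trans hk)
    · intro h hh
      have h1 := (hc h (Finset.mem_filter.1 hh).2).choose_spec.2
      rw [hairEdge_some h1, hairGhost_some h1]
  · obtain ⟨h, rfl, hk⟩ := P.hair_full u h0
    rw [Finset.sum_eq_single h]
    · rw [hairEdge_none hk, hairGhost_none hk]
      exact vert_mul_self _
    · intro h' hh hne
      exact absurd (P.hair_unique h h' hk (Finset.mem_filter.1 hh).2) hne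
    · intro hh
      exact absurd (by simp) hh

/-- The homomorphism from the Leavitt path algebra of a hair extension to the endomorphism ring of
the corresponding direct sum of modules `L_K(E) v`. -/
noncomputable def hairHom (K : Type) [Field K] :
    LeavittPathAlgebra K H →ₐ[K] CornerEnd (hairIdem P K) :=
  (endFamily K (idem_hairIdem P) (hairEdge P K) (hairGhost P K) (hairGhost_mul P)
    (hairEdge_mul P) (hair_orth P) (hair_ck P)).hom

theorem hairHom_vert (u : H.V) :
    hairHom P K (vert K _ u) = elt (idem_hairIdem P) u u 1 := Family.hom_vert _ u

theorem hairHom_edge (h : H.E) : hairHom P K (edge K _ h) =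
    elt (idem_hairIdem P) (H.r h) (H.s h) (hairGhost P K h) := Family.hom_edge _ h

theorem hairHom_ghost (h : H.E) : hairHom P K (ghost K _ h) =
    elt (idem_hairIdem P) (H.s h) (H.r h) (hairEdge P K h) := Family.hom_ghost _ h

/-! ### Injectivity of `hairHom`

The endomorphism ring is graded so that `hairHom` is graded. -/

/-- The endomorphisms homogeneous of degree `-d`; the degrees of the entries are shifted by the
heights. -/
def IsDeg (d : ℤ) (f : CornerEnd (hairIdem P K)) : Prop :=
  ∀ u u', IsHom (d + P.height u' - P.height u) (entry (idem_hairIdem P) f u u')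

variable {P}

theorem IsDeg.mul {a b : ℤ} {f g : CornerEnd (hairIdem P K)}
    (hg : IsDeg P a g) (hf : IsDeg P b f) : IsDeg P (a + b) (g * f) := by
  intro u u'
  rw [entry_mul]
  refine IsHom.sum _ fun u₁ _ => ?_
  have := (hf u u₁).mul (hg u₁ u')
  convert this using 1
  ring

theorem IsDeg.sum {d : ℤ} {ι : Type} (s : Finset ι) {f : ι → CornerEnd (hairIdem P K)}
    (hf : ∀ i ∈ s, IsDeg P d (f i)) : IsDeg P d (∑ i ∈ s, f i) := by
  classical
  induction s using Finset.induction_on with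
  | empty => intro u u'; rw [Finset.sum_empty, entry_zero]; exact isHom_zero _
  | insert a s ha ih =>
    intro u u'
    rw [Finset.sum_insert ha, entry_add]
    exact (hf _ (Finset.mem_insert_self _ _) u u').add
      (ih (fun i hi => hf i (Finset.mem_insert_of_mem hi)) u u')

theorem IsDeg.smul {d : ℤ} (c : K) {f : CornerEnd (hairIdem P K)}
    (hf : IsDeg P d f) : IsDeg P d (c • f) := by
  intro u u'
  rw [entry_smul]
  exact (hf u u').smul c

theorem isDeg_elt {d : ℤ} {u u' : H.V} {a : LeavittPathAlgebra K E}
    (ha : IsHom (d + P.height u' - P.height u) a) :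
    IsDeg P d (elt (idem_hairIdem P) u u' a) := by
  intro v v'
  rw [entry_elt]
  split_ifs with h
  · obtain ⟨rfl, rfl⟩ := h
    simpa using ((isHom_vert (P.root u)).mul ha).mul (isHom_vert (P.root u'))
  · exact isHom_zero _

theorem isDeg_ghost (h : H.E) : IsDeg P 1 (hairHom P K (ghost K _ h)) := by
  rw [hairHom_ghost]
  apply isDeg_elt
  cases hk : P.kind h with
  | none =>
    rw [hairEdge_none hk, P.hair_height h hk]
    convert isHom_vert (K := K) (P.root (H.s h)) using 1
    push_cast
    ring
  | some e =>
    rw [hairEdge_some hk, P.core_height_s h e hk, P.core_height_r h e hk]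
    simpa using isHom_edge (K := K) e

theorem isDeg_Pd {d : ℕ} {x : LeavittPathAlgebra K H} (hx : x ∈ Pd K _ d) :
    IsDeg P d (hairHom P K x) := by
  induction d generalizing x with
  | zero =>
    obtain ⟨c, rfl⟩ := mem_Pd_zero.1 hx
    rw [map_sum]
    refine IsDeg.sum _ fun u _ => ?_
    rw [map_smul, hairHom_vert]
    refine IsDeg.smul _ (isDeg_elt ?_)
    have : IsHom 0 (1 : LeavittPathAlgebra K E) := by
      rw [one_eq_sum]
      exact IsHom.sum _ fun v _ => isHom_vert v
    simpa using this
  | succ d ih =>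
    obtain ⟨y, hy, rfl⟩ := mem_Pd_succ.1 hx
    rw [map_sum]
    refine IsDeg.sum _ fun h _ => ?_
    rw [map_mul]
    have := (isDeg_ghost (K := K) (P := P) h).mul (ih (hy h))
    rwa [add_comm, ← Nat.cast_succ] at this

theorem comp_entry_Plt {N i : ℕ} (h : N ≤ i) {x : LeavittPathAlgebra K H}
    (hx : x ∈ Plt K _ N) (u u' : H.V) :
    comp (i + P.height u' - P.height u)
      (entry (idem_hairIdem P) (hairHom P K x) u u') = 0 := by
  induction N generalizing x with
  | zero =>
    have : x = 0 := hx
    rw [this, map_zero, entry_zero, map_zero]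
  | succ N ih =>
    obtain ⟨y, hy, z, hz, rfl⟩ := mem_Plt_succ.1 hx
    rw [map_add, entry_add, map_add, ih (by omega) hy, zero_add]
    exact comp_of_isHom_ne (isDeg_Pd hz u u') (by omega)

theorem hairHom_vert_ne (u : H.V) : hairHom P K (vert K _ u) ≠ 0 := by
  intro h
  have h1 := congrArg (fun f => entry (idem_hairIdem P) f u u) h
  simp only [hairHom_vert, entry_elt, and_self, if_true, mul_one, entry_zero] at h1
  rw [idem_hairIdem P] at h1
  exact vert_ne_zero _ h1

/-- On homogeneous combinations of ghost paths, injectivity is proved by stripping letters from the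
right, down to combinations of vertices. -/
theorem hairHom_inj_Pd {d : ℕ} {x : LeavittPathAlgebra K H} (hx : x ∈ Pd K _ d)
    (h0 : hairHom P K x = 0) : x = 0 := by
  induction d generalizing x with
  | zero =>
    have key : ∀ u, x * vert K _ u = 0 := by
      intro u
      obtain ⟨c, hc⟩ := Pd_zero_mul_vert hx u
      have h1 : c • hairHom P K (vert K _ u) = 0 := by
        rw [← map_smul, ← hc, map_mul, h0, zero_mul]
      by_cases hc0 : c = 0
      · rw [hc, hc0, zero_smul]
      · exact absurd (cornerEnd_eq_zero hc0 h1) (hairHom_vert_ne u)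
    rw [← mul_one x, one_eq_sum, Finset.mul_sum]
    exact Finset.sum_eq_zero fun u _ => key u
  | succ d ih =>
    rw [eq_sum_mul_ghost hx]
    refine Finset.sum_eq_zero fun f _ => ?_
    rw [ih (mul_edge_mem_Pd hx f) (by rw [map_mul, h0, zero_mul]), zero_mul]

theorem hairHom_inj_Plt {N : ℕ} {x : LeavittPathAlgebra K H}
    (hx : x ∈ Plt K _ N) (h0 : hairHom P K x = 0) : x = 0 := by
  induction N generalizing x with
  | zero => exact hx
  | succ N ih =>
    obtain ⟨y, hy, z, hz, rfl⟩ := mem_Plt_succ.1 hx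
    have hz0 : z = 0 := by
      refine hairHom_inj_Pd (P := P) hz (eq_zero_of_entry (idem_hairIdem P) fun u u' => ?_)
      rw [← comp_of_isHom (isDeg_Pd hz u u')]
      have := congrArg (fun f => comp (N + P.height u' - P.height u)
        (entry (idem_hairIdem P) f u u')) h0
      simp only [map_add, entry_add, comp_entry_Plt le_rfl hy, zero_add, entry_zero,
        map_zero] at this
      exact this
    subst hz0
    rw [add_zero] at h0 ⊢
    exact ih hy h0

/-- A nonzero element of the kernel could be multiplied on the left into a nonzero combination of
ghost paths. -/
theorem hairHom_injective : Function.Injective (hairHom P K) := by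
  intro x y hxy
  by_contra hne
  obtain ⟨k, hk⟩ := exists_mem_Lk (x - y)
  obtain ⟨b, hb, -, hb0⟩ := exists_mul_mem (fun _ : Unit => x - y) (fun _ => hk)
    (fun h => hne (sub_eq_zero.1 (congrFun h ())))
  obtain ⟨N, hN⟩ := hb ()
  refine hb0 (hairHom_inj_Plt (P := P) hN ?_)
  rw [map_mul, map_sub, hxy, sub_self, mul_zero]

/-! ### Surjectivity of `hairHom` -/

theorem vert_range (u : H.V) : elt (idem_hairIdem P) u u 1 ∈ (hairHom P K).range :=
  (AlgHom.mem_range _).2 ⟨_, hairHom_vert P u⟩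

theorem edge_range (h : H.E) :
    elt (idem_hairIdem P) (H.r h) (H.s h) (hairGhost P K h) ∈ (hairHom P K).range :=
  (AlgHom.mem_range _).2 ⟨_, hairHom_edge P h⟩

theorem ghost_range (h : H.E) :
    elt (idem_hairIdem P) (H.s h) (H.r h) (hairEdge P K h) ∈ (hairHom P K).range :=
  (AlgHom.mem_range _).2 ⟨_, hairHom_ghost P h⟩

/-- The matrix units between a vertex and the root of its hair lie in the range. -/
theorem hair_units (n : ℕ) : ∀ u : H.V, P.height u = n →
    ∃ b, P.height b = 0 ∧ P.root b = P.root u ∧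
      elt (idem_hairIdem P) u b 1 ∈ (hairHom P K).range ∧
      elt (idem_hairIdem P) b u 1 ∈ (hairHom P K).range := by
  induction n with
  | zero => exact fun u hu => ⟨u, hu, rfl, vert_range u, vert_range u⟩
  | succ n ih =>
    intro u hu
    obtain ⟨h, rfl, hk⟩ := P.hair_full u (by omega)
    obtain ⟨b, hb0, hbr, h1, h2⟩ := ih (H.r h) (by have := P.hair_height h hk; omega)
    have hroot := P.hair_root h hk
    have h3 := ghost_range (P := P) (K := K) h
    have h4 := edge_range (P := P) (K := K) h
    rw [hairEdge_none hk] at h3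
    rw [hairGhost_none hk] at h4
    have h5 := mul_mem h1 h3
    have h6 := mul_mem h4 h2
    rw [elt_mul] at h5 h6
    refine ⟨b, hb0, hbr.trans hroot, ?_, ?_⟩
    · convert h5 using 1
      apply elt_congr
      simp only [hairIdem, hbr, hroot, mul_one, vert_mul_self]
    · convert h6 using 1
      apply elt_congr
      simp only [hairIdem, hbr, hroot, mul_one, one_mul, vert_mul_self]

/-- Entries between vertices of height zero that are combinations of ghost paths lie in the range:
the last letter of a path is provided by an edge of the full subgraph. -/
theorem elt_mem_Pd {d : ℕ} {a : LeavittPathAlgebra K E} (ha : a ∈ Pd K E d) (u u' : H.V)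
    (hu : P.height u = 0) (hu' : P.height u' = 0) :
    elt (idem_hairIdem P) u u' a ∈ (hairHom P K).range := by
  induction d generalizing a u u' with
  | zero =>
    obtain ⟨c, hc⟩ := vert_mul_Pd_zero ha (P.root u)
    by_cases h : u = u'
    · subst h
      have : elt (idem_hairIdem P) u u a = c • elt (idem_hairIdem P) u u 1 := by
        rw [← elt_smul]
        apply elt_congr
        rw [hairIdem, hc, mul_smul_comm, mul_one]
      rw [this]
      exact Subalgebra.smul_mem _ (vert_range u) c
    · have : elt (idem_hairIdem P) u u' a = elt (idem_hairIdem P) u u' 0 := by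
        apply elt_congr
        rw [hairIdem, hc, smul_mul_assoc, vert_mul_vert,
          if_neg fun hr => h (P.root_inj u u' hu hu' hr), smul_zero, mul_zero, zero_mul]
      rw [this, elt_zero]
      exact zero_mem _
  | succ d ih =>
    rw [eq_sum_mul_ghost ha, elt_sum]
    refine Subalgebra.sum_mem _ fun e _ => ?_
    by_cases he : E.s e = P.root u'
    · obtain ⟨h, rfl, hk⟩ := P.core_full u' e hu' he
      have h1 := ih (mul_edge_mem_Pd ha e) u (H.r h) hu (P.core_height_r h e hk)
      have h2 := mul_mem (edge_range h) h1
      rwa [elt_mul, hairGhost_some hk, hairIdem, ← P.core_r h e hk, mul_assoc _ (vert K E _),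
        vert_mul_ghost, if_pos rfl] at h2
    · have : elt (idem_hairIdem P) u u' (a * edge K E e * ghost K E e) =
          elt (idem_hairIdem P) u u' 0 := by
        apply elt_congr
        rw [mul_assoc, mul_assoc _ (ghost K E e), ghost_mul_vert, if_neg he]
        simp
      rw [this, elt_zero]
      exact zero_mem _

theorem elt_mem_Plt {N : ℕ} {a : LeavittPathAlgebra K E} (ha : a ∈ Plt K E N) (u u' : H.V)
    (hu : P.height u = 0) (hu' : P.height u' = 0) :
    elt (idem_hairIdem P) u u' a ∈ (hairHom P K).range := by
  induction N generalizing a with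
  | zero =>
    have : a = 0 := ha
    rw [this, elt_zero]
    exact zero_mem _
  | succ N ih =>
    obtain ⟨y, hy, z, hz, rfl⟩ := mem_Plt_succ.1 ha
    rw [elt_add]
    exact add_mem (ih hy) (elt_mem_Pd hz u u' hu hu')

/-- All entries between vertices of height zero lie in the range: real edges are split off from the
left by the Cuntz-Krieger relation. -/
theorem elt_mem {k : ℕ} {a : LeavittPathAlgebra K E} (ha : a ∈ Lk K E k) (u u' : H.V)
    (hu : P.height u = 0) (hu' : P.height u' = 0) :
    elt (idem_hairIdem P) u u' a ∈ (hairHom P K).range := by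
  induction k generalizing a u with
  | zero =>
    obtain ⟨N, hN⟩ := ha
    exact elt_mem_Plt hN u u' hu hu'
  | succ k ih =>
    have h0 : elt (idem_hairIdem P) u u' a =
        elt (idem_hairIdem P) u u' (vert K E (P.root u) * a) := by
      apply elt_congr
      rw [← mul_assoc (vert K E (P.root u)), vert_mul_self]
    rw [h0]
    by_cases hv : E.IsRegular (P.root u)
    · rw [vert_eq_sum _ hv, Finset.sum_mul, elt_sum]
      refine Subalgebra.sum_mem _ fun e he => ?_
      obtain ⟨h, rfl, hk⟩ := P.core_full u e hu (Finset.mem_filter.1 he).2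
      have h1 := ih (ha.2 e) (H.r h) (P.core_height_r h e hk)
      have h2 := mul_mem h1 (ghost_range h)
      rwa [elt_mul, hairEdge_some hk, hairIdem, ← P.core_r h e hk, edge_mul_vert, if_pos rfl,
        ← mul_assoc] at h2
    · obtain ⟨N, hN⟩ := ha.1 _ hv
      exact elt_mem_Plt hN u u' hu hu'

theorem hairHom_surjective : Function.Surjective (hairHom P K) := by
  intro f
  rw [← AlgHom.mem_range, eq_sum_elt (idem_hairIdem P) f]
  refine Subalgebra.sum_mem _ fun u _ => Subalgebra.sum_mem _ fun u' _ => ?_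
  generalize entry (idem_hairIdem P) f u u' = a
  obtain ⟨k, hk⟩ := exists_mem_Lk a
  obtain ⟨b, hb0, hb, h1, -⟩ := hair_units (P := P) (K := K) _ u rfl
  obtain ⟨b', hb0', hb', -, h2⟩ := hair_units (P := P) (K := K) _ u' rfl
  have h3 := mul_mem h2 (mul_mem (elt_mem hk b b' hb0 hb0') h1)
  rw [elt_mul, elt_mul] at h3
  convert h3 using 1
  apply elt_congr
  simp only [hairIdem, hb, hb', one_mul, mul_one, mul_assoc, vert_mul_self]
  simp only [← mul_assoc, vert_mul_self]

/-- If `H` is presented as a hair extension of a full subgraph of `E`, then `L_K(H)` is the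
endomorphism ring of the direct sum of the modules `L_K(E) v`, with one summand for each vertex of
`H`. -/
theorem end_hair (K : Type) [Field K] (P : HairPres H E) :
    Nonempty (Module.End (LeavittPathAlgebra K E) (stdMod (K := K) P.root) ≃ₐ[K]
      LeavittPathAlgebra K H) :=
  ⟨(AlgEquiv.ofBijective (hairHom P K) ⟨hairHom_injective, hairHom_surjective⟩).symm⟩

end LeavittPathAlgebra

/-! ### Isomorphisms between direct sums of modules `R ε(u)` -/

section CornerEquiv

variable {R U U' : Type} [Ring R]

/-- Reindexing the summands, and replacing each idempotent by an equivalent one. -/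
def cornerReindex {ε : U → R} {ε' : U' → R} (σ : U' ≃ U) (p q : U' → R)
    (hp : ∀ u, p u * ε' u = p u) (hq : ∀ u, q u * ε (σ u) = q u)
    (hpq : ∀ u, p u * q u = ε (σ u)) (hqp : ∀ u, q u * p u = ε' u) :
    cornerMod ε ≃ₗ[R] cornerMod ε' where
  toFun x := ⟨fun u => x.1 (σ u) * p u, fun u => by rw [mul_assoc, hp]⟩
  invFun y := ⟨fun u => y.1 (σ.symm u) * q (σ.symm u), fun u => by
    have := hq (σ.symm u)
    rw [Equiv.apply_symm_apply] at this
    rw [mul_assoc, this]⟩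
  map_add' x y := by
    apply Subtype.ext
    funext u
    exact add_mul _ _ _
  map_smul' a x := by
    apply Subtype.ext
    funext u
    exact mul_assoc _ _ _
  left_inv x := by
    apply Subtype.ext
    funext u
    change x.1 (σ (σ.symm u)) * p (σ.symm u) * q (σ.symm u) = x.1 u
    rw [mul_assoc, hpq, Equiv.apply_symm_apply, x.2 u]
  right_inv y := by
    apply Subtype.ext
    funext u
    change y.1 (σ.symm (σ u)) * q (σ.symm (σ u)) * p u = y.1 u
    rw [Equiv.symm_apply_apply, mul_assoc, hqp, y.2 u]

/-- If `R ε(u₀)` is the direct sum of a copy of itself, embedded through `a`, and of modules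
isomorphic to `R ε(j)` for `j : J`, embedded through `b j`, then the summands `R ε(j)` can be
adjoined to any direct sum containing `R ε(u₀)`. -/
def cornerEnlarge {J : Type} [DecidableEq U] [Fintype J] [DecidableEq J] {ε : U ⊕ J → R} (u₀ : U)
    (a a' : R) (b b' : J → R)
    (ha : a * ε (Sum.inl u₀) = a) (ha' : a' * ε (Sum.inl u₀) = a')
    (hb : ∀ j, b j * ε (Sum.inr j) = b j) (hb' : ∀ j, b' j * ε (Sum.inl u₀) = b' j)
    (haa : a' * a = ε (Sum.inl u₀)) (hab : ∀ j, a' * b j = 0) (hba : ∀ j, b' j * a = 0)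
    (hbb : ∀ i j, b' i * b j = if i = j then ε (Sum.inr i) else 0)
    (hsum : a * a' + ∑ j, b j * b' j = ε (Sum.inl u₀)) :
    cornerMod (fun u => ε (Sum.inl u)) ≃ₗ[R] cornerMod ε where
  toFun x := ⟨Sum.elim (Function.update x.1 u₀ (x.1 u₀ * a)) (fun j => x.1 u₀ * b j), by
    rintro (u | j)
    · by_cases h : u = u₀
      · subst h
        simp only [Sum.elim_inl, Function.update_self, mul_assoc, ha]
      · simp only [Sum.elim_inl, Function.update_of_ne h]
        exact x.2 u
    · simp only [Sum.elim_inr, mul_assoc, hb]⟩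
  invFun y := ⟨Function.update (fun u => y.1 (Sum.inl u)) u₀
      (y.1 (Sum.inl u₀) * a' + ∑ j, y.1 (Sum.inr j) * b' j), by
    intro u
    by_cases h : u = u₀
    · subst h
      simp only [Function.update_self, add_mul, Finset.sum_mul, mul_assoc, ha', hb']
    · simp only [Function.update_of_ne h]
      exact y.2 (Sum.inl u)⟩
  map_add' x y := by
    apply Subtype.ext
    funext u
    rcases u with u | j
    · change Function.update (x.1 + y.1) u₀ ((x.1 u₀ + y.1 u₀) * a) u =
        Function.update x.1 u₀ (x.1 u₀ * a) u + Function.update y.1 u₀ (y.1 u₀ * a) u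
      by_cases h : u = u₀
      · subst h
        rw [Function.update_self, Function.update_self, Function.update_self, add_mul]
      · rw [Function.update_of_ne h, Function.update_of_ne h, Function.update_of_ne h]
        rfl
    · exact add_mul _ _ _
  map_smul' c x := by
    apply Subtype.ext
    funext u
    rcases u with u | j
    · change Function.update (c • x.1) u₀ (c * x.1 u₀ * a) u =
        c * Function.update x.1 u₀ (x.1 u₀ * a) u
      by_cases h : u = u₀
      · subst h
        rw [Function.update_self, Function.update_self, mul_assoc]
      · rw [Function.update_of_ne h, Function.update_of_ne h]
        rfl
    · exact mul_assoc _ _ _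
  left_inv x := by
    apply Subtype.ext
    funext u
    by_cases h : u = u₀
    · subst h
      simp only [Sum.elim_inl, Sum.elim_inr, Function.update_self, mul_assoc]
      rw [← Finset.mul_sum, ← mul_add, hsum]
      exact x.2 u
    · simp [Function.update_of_ne h]
  right_inv y := by
    apply Subtype.ext
    funext u
    rcases u with u | j
    · by_cases h : u = u₀
      · subst h
        simp only [Sum.elim_inl, Function.update_self, add_mul, Finset.sum_mul, mul_assoc, haa,
          hba, mul_zero, Finset.sum_const_zero, add_zero]
        exact y.2 (Sum.inl u)
      · simp [Function.update_of_ne h]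
    · simp only [Sum.elim_inr, Function.update_self, add_mul, Finset.sum_mul, mul_assoc, hab,
        hbb, mul_zero, zero_add, mul_ite, Finset.sum_ite_eq', Finset.mem_univ, if_true]
      exact y.2 (Sum.inr j)

end CornerEquiv

/-! ### Standard modules over a hair extension of a totally looped graph -/

/-- A presentation of `H` as a hair extension of `F` itself, together with the embedding of `F`. -/
structure HairExt (H F : FinGraph) extends HairPres H F where
  core : F.V → H.V
  height_core : ∀ v, height (core v) = 0
  root_core : ∀ v, root (core v) = v

namespace HairExt

variable {H F : FinGraph} (P : HairExt H F)

theorem core_root {u : H.V} (hu : P.height u = 0) : P.core (P.root u) = u :=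
  P.root_inj _ _ (P.height_core _) hu (P.root_core _)

theorem exists_kind {h : H.E} {v : F.V} (hs : H.s h = P.core v) : ∃ e, P.kind h = some e := by
  cases hk : P.kind h with
  | none =>
    have h1 := P.hair_height h hk
    rw [hs, P.height_core] at h1
    omega
  | some e => exact ⟨e, rfl⟩

theorem r_eq_core {h : H.E} {v : F.V} (hs : H.s h = P.core v) :
    P.core (P.root (H.r h)) = H.r h := by
  obtain ⟨e, he⟩ := P.exists_kind hs
  exact P.core_root (P.core_height_r h e he)

theorem exists_loop (hF : F.TotallyLooped) {v : F.V} (hv : H.IsRegular (P.core v)) :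
    ∃ h, H.s h = P.core v ∧ H.r h = P.core v := by
  obtain ⟨h, hs⟩ := hv
  obtain ⟨e, he⟩ := P.exists_kind hs
  have h1 := P.core_s h e he
  rw [hs, P.root_core] at h1
  obtain ⟨l, hls, hlr⟩ := hF v ⟨e, h1⟩
  obtain ⟨k, hks, hkl⟩ := P.core_full (P.core v) l (P.height_core v) (by rw [P.root_core, hls])
  refine ⟨k, hks, ?_⟩
  rw [← P.r_eq_core hks, ← P.core_r k l hkl, hlr]

theorem exists_core_edge (f : F.E) : ∃ h, H.s h = P.core (F.s f) ∧ P.kind h = some f :=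
  P.core_full _ f (P.height_core _) (P.root_core _).symm

end HairExt

namespace LeavittPathAlgebra

variable {K : Type} [Field K] {H F : FinGraph} (P : HairExt H F)

/-- The vertices along a hair are equivalent idempotents. -/
theorem hair_vert_equiv (n : ℕ) : ∀ u : H.V, P.height u = n → ∃ p q : LeavittPathAlgebra K H,
    p * vert K H (P.core (P.root u)) = p ∧ q * vert K H u = q ∧ p * q = vert K H u ∧
      q * p = vert K H (P.core (P.root u)) := by
  induction n with
  | zero =>
    intro u hu
    refine ⟨vert K H u, vert K H u, ?_⟩
    rw [P.core_root hu]
    simp only [vert_mul_self, and_self]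
  | succ n ih =>
    intro u hu
    obtain ⟨h, rfl, hk⟩ := P.hair_full u (by omega)
    obtain ⟨p, q, h1, h2, h3, h4⟩ := ih (H.r h) (by have := P.hair_height h hk; omega)
    rw [P.hair_root h hk] at h1 h4
    refine ⟨edge K H h * p, q * ghost K H h, ?_, ?_, ?_, ?_⟩
    · rw [mul_assoc, h1]
    · rw [mul_assoc, ghost_mul_vert, if_pos rfl]
    · rw [mul_assoc, ← mul_assoc p, h3, vert_mul_ghost, if_pos rfl, vert_eq_sum _ ⟨h, rfl⟩]
      have : Finset.univ.filter (fun e : H.E => H.s e = H.s h) = {h} := by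
        ext e
        simp only [Finset.mem_filter, Finset.mem_univ, true_and, Finset.mem_singleton]
        exact ⟨P.hair_unique h e hk, fun h => by rw [h]⟩
      rw [this, Finset.sum_singleton]
    · rw [mul_assoc, ← mul_assoc (ghost K H h), ghost_mul_edge, if_pos rfl, ← mul_assoc, h2, h4]

theorem stdMod_equiv_core {ι : Type} (w : ι → H.V) :
    Nonempty (stdMod (K := K) w ≃ₗ[LeavittPathAlgebra K H]
      stdMod (K := K) fun i => P.core (P.root (w i))) := by
  choose p q h1 h2 h3 h4 using fun i => hair_vert_equiv (K := K) P _ (w i) rfl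
  exact ⟨cornerReindex (Equiv.refl ι) p q h1 h2 h3 h4⟩

theorem stdMod_reindex {ι ι' : Type} {w : ι → H.V} {w' : ι' → H.V} (σ : ι' ≃ ι)
    (h : ∀ i, w (σ i) = w' i) : Nonempty (stdMod (K := K) w ≃ₗ[LeavittPathAlgebra K H]
      stdMod (K := K) w') :=
  ⟨cornerReindex σ (fun i => vert K H (w' i)) (fun i => vert K H (w' i))
    (fun _ => vert_mul_self _) (fun i => by rw [h]; exact vert_mul_self _)
    (fun i => by rw [h]; exact vert_mul_self _) (fun _ => vert_mul_self _)⟩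

/-- If a vertex `v` of `F` emits a loop `l`, then `L v ≅ L v ⊕ ⨁ L r(h)`, where `h` runs through
the other edges emitted by `v`. -/
theorem stdMod_enlarge {ι : Type} [DecidableEq ι] (w : ι → F.V) (i₀ : ι) (l : H.E)
    (hs : H.s l = P.core (w i₀)) (hr : H.r l = P.core (w i₀)) :
    Nonempty (stdMod (K := K) (fun i => P.core (w i)) ≃ₗ[LeavittPathAlgebra K H]
      stdMod (K := K) fun i => P.core (Sum.elim w
        (fun h : {h : H.E // H.s h = P.core (w i₀) ∧ h ≠ l} => P.root (H.r h.1)) i)) := by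
  refine ⟨cornerEnlarge (ε := fun i => vert K H (P.core (Sum.elim w
        (fun h : {h : H.E // H.s h = P.core (w i₀) ∧ h ≠ l} => P.root (H.r h.1)) i))) i₀
    (edge K H l) (ghost K H l) (fun h => edge K H h.1) (fun h => ghost K H h.1)
    ?_ ?_ ?_ ?_ ?_ ?_ ?_ ?_ ?_⟩
  · rw [Sum.elim_inl, edge_mul_vert, if_pos hr]
  · rw [Sum.elim_inl, ghost_mul_vert, if_pos hs]
  · intro h
    rw [Sum.elim_inr, P.r_eq_core h.2.1, edge_mul_vert, if_pos rfl]
  · intro h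
    rw [Sum.elim_inl, ghost_mul_vert, if_pos h.2.1]
  · rw [Sum.elim_inl, ghost_mul_edge, if_pos rfl, hr]
  · intro h
    rw [ghost_mul_edge, if_neg h.2.2.symm]
  · intro h
    rw [ghost_mul_edge, if_neg h.2.2]
  · intro h h'
    rw [Sum.elim_inr, P.r_eq_core h.2.1, ghost_mul_edge]
    exact if_congr Subtype.ext_iff.symm rfl rfl
  · rw [Sum.elim_inl, vert_eq_sum _ ⟨l, hs⟩, ← Finset.add_sum_erase _ _
      (Finset.mem_filter.2 ⟨Finset.mem_univ l, hs⟩)]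
    congr 1
    symm
    exact Finset.sum_subtype _ (fun h => by
      simp only [Finset.mem_erase, Finset.mem_filter, Finset.mem_univ, true_and]
      exact and_comm) _

/-- Every standard module on vertices of `F` is isomorphic to one whose set of vertices is
hereditary. -/
theorem exists_hereditary (hF : F.TotallyLooped) (n : ℕ) : ∀ (ι : Type) [Fintype ι] (w : ι → F.V),
    (Finset.univ.filter fun v => ∀ i, w i ≠ v).card < n →
    ∃ (ι' : Type) (_ : Fintype ι') (w' : ι' → F.V),
      (∀ e i, w' i = F.s e → ∃ i', w' i' = F.r e) ∧
      Nonempty (stdMod (K := K) (fun i => P.core (w i)) ≃ₗ[LeavittPathAlgebra K H]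
        stdMod (K := K) fun i => P.core (w' i)) := by
  classical
  induction n with
  | zero => intro ι _ w h; omega
  | succ n ih =>
    intro ι _ w hn
    by_cases hw : ∀ e i, w i = F.s e → ∃ i', w i' = F.r e
    · exact ⟨ι, inferInstance, w, hw, ⟨LinearEquiv.refl _ _⟩⟩
    · push Not at hw
      obtain ⟨e, i₀, hi, hne⟩ := hw
      obtain ⟨h, hs, hk⟩ := P.core_full (P.core (w i₀)) e (P.height_core _)
        (by rw [P.root_core, hi])
      obtain ⟨l, hls, hlr⟩ := P.exists_loop hF ⟨h, hs⟩
      have hre := P.core_r h e hk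
      have hl : h ≠ l := by
        rintro rfl
        rw [hlr, P.root_core] at hre
        exact hne i₀ hre.symm
      obtain ⟨e₁⟩ := stdMod_enlarge (K := K) P w i₀ l hls hlr
      obtain ⟨ι', hι', w', hw', ⟨e₂⟩⟩ := ih _ (Sum.elim w
        (fun h : {h : H.E // H.s h = P.core (w i₀) ∧ h ≠ l} => P.root (H.r h.1))) (by
          refine lt_of_lt_of_le (Finset.card_lt_card ?_) (Nat.lt_succ_iff.1 hn)
          refine (Finset.ssubset_iff_of_subset ?_).2 ⟨F.r e, ?_, ?_⟩
          · intro v hv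
            rw [Finset.mem_filter] at hv ⊢
            exact ⟨hv.1, fun i => hv.2 (Sum.inl i)⟩
          · exact Finset.mem_filter.2 ⟨Finset.mem_univ _, hne⟩
          · intro hv
            exact (Finset.mem_filter.1 hv).2 (Sum.inr ⟨h, hs, hl⟩) hre.symm)
      exact ⟨ι', hι', w', hw', ⟨e₁.trans e₂⟩⟩

/-- A standard module which is a generator involves all the vertices of `F`, provided its set of
vertices is hereditary. The vertices of `H` on the hairs rooted at a member of `w` form a hereditary
saturated set, saturation being due to the loops. A representation in which exactly these vertices
act as zero annihilates the image of every homomorphism from the standard module to `L_K(H)`. -/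
theorem generator_surjective (hF : F.TotallyLooped) {ι : Type} [Fintype ι] (w : ι → F.V)
    (hw : ∀ e i, w i = F.s e → ∃ i', w i' = F.r e) {n : ℕ}
    (f : (Fin n → stdMod (K := K) fun i => P.core (w i)) →ₗ[LeavittPathAlgebra K H]
      LeavittPathAlgebra K H) (hf : Function.Surjective f) (v : F.V) : ∃ i, w i = v := by
  classical
  obtain ⟨N, _, _, φ, hφ⟩ := exists_rep (G := H) (H := fun u => ∃ i, w i = P.root u) K
    (by
      rintro h ⟨i, hi⟩
      cases hk : P.kind h with
      | none => exact ⟨i, by rw [hi, P.hair_root h hk]⟩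
      | some e =>
        rw [← P.core_s h e hk] at hi
        rw [← P.core_r h e hk]
        exact hw e i hi)
    (by
      intro u hu hall
      by_cases h0 : P.height u = 0
      · rw [← P.core_root h0] at hu
        obtain ⟨l, hs, hr⟩ := P.exists_loop hF hu
        rw [P.core_root h0] at hs hr
        rw [← hr]
        exact hall l hs
      · obtain ⟨h, rfl, hk⟩ := P.hair_full u h0
        rw [← P.hair_root h hk]
        exact hall h rfl)
  have hε : Idem fun i => vert K H (P.core (w i)) := fun i => vert_mul_self _
  have key : ∀ g : stdMod (K := K) (fun i => P.core (w i)) →ₗ[LeavittPathAlgebra K H]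
      LeavittPathAlgebra K H, ∀ x, φ (g x) = 0 := by
    intro g x
    rw [eq_sum_basisVec hε x, map_sum, map_sum]
    refine Finset.sum_eq_zero fun i _ => ?_
    rw [map_smul, smul_eq_mul, ← x.2 i, map_mul, map_mul,
      (hφ (P.core (w i))).2 ⟨i, (P.root_core _).symm⟩, mul_zero, zero_mul]
  obtain ⟨q, hq⟩ := hf 1
  have h1 : φ 1 = 0 := by
    rw [← hq, ← Finset.univ_sum_single q, map_sum, map_sum]
    refine Finset.sum_eq_zero fun i _ => ?_
    exact key
      { toFun := fun x => f (Pi.single i x)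
        map_add' := fun x y => by rw [Pi.single_add, map_add]
        map_smul' := fun c x => by rw [Pi.single_smul, map_smul, RingHom.id_apply] } (q i)
  obtain ⟨i, hi⟩ := (hφ (P.core v)).1 (by rw [← mul_one (vert K H _), map_mul, h1, mul_zero])
  exact ⟨i, by rw [hi, P.root_core]⟩

end LeavittPathAlgebra

/-! ### Hair extensions of hereditary subgraphs -/

/-- An embedding of graphs whose image contains every edge emitted by a vertex of the image. -/
structure FullEmb (F E : FinGraph) where
  v : F.V → E.V
  e : F.E → E.E
  v_inj : Function.Injective v
  e_inj : Function.Injective e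
  s_e : ∀ f, E.s (e f) = v (F.s f)
  r_e : ∀ f, E.r (e f) = v (F.r f)
  full : ∀ (f' : E.E) (u : F.V), E.s f' = v u → ∃ f, e f = f'

namespace FullEmb

/-- The identity embedding. -/
def refl (F : FinGraph) : FullEmb F F where
  v := id
  e := id
  v_inj := Function.injective_id
  e_inj := Function.injective_id
  s_e _ := rfl
  r_e _ := rfl
  full f' _ _ := ⟨f', rfl⟩

/-- The embedding of a restriction graph. -/
def ofRestrict (F : FinGraph) (T : Finset F.V) (hT : F.Hereditary T) :
    FullEmb (F.restrict T hT) F where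
  v u := u.1
  e f := f.1
  v_inj := Subtype.val_injective
  e_inj := Subtype.val_injective
  s_e _ := rfl
  r_e _ := rfl
  full f' u h := ⟨⟨f', h ▸ u.2⟩, rfl⟩

/-- Composition of full embeddings. -/
def comp {F₁ F₂ F₃ : FinGraph} (j : FullEmb F₂ F₃) (i : FullEmb F₁ F₂) : FullEmb F₁ F₃ where
  v u := j.v (i.v u)
  e f := j.e (i.e f)
  v_inj := j.v_inj.comp i.v_inj
  e_inj := j.e_inj.comp i.e_inj
  s_e f := by rw [j.s_e, i.s_e]
  r_e f := by rw [j.r_e, i.r_e]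
  full f' u h := by
    obtain ⟨f, rfl⟩ := j.full f' _ h
    rw [j.s_e] at h
    obtain ⟨g, rfl⟩ := i.full f u (j.v_inj h)
    exact ⟨g, rfl⟩

/-- The embedding of a graph in a hair extension of it. -/
noncomputable def ofHairExt {H F : FinGraph} (P : HairExt H F) : FullEmb F H where
  v := P.core
  e f := (P.exists_core_edge f).choose
  v_inj := fun u u' h => by rw [← P.root_core u, h, P.root_core]
  e_inj := fun f f' h => by
    have h1 := (P.exists_core_edge f).choose_spec.2
    have h2 := (P.exists_core_edge f').choose_spec.2
    dsimp only at h
    rw [h, h2] at h1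
    exact (Option.some.inj h1).symm
  s_e f := (P.exists_core_edge f).choose_spec.1
  r_e f := by
    obtain ⟨h1, h2⟩ := (P.exists_core_edge f).choose_spec
    rw [← P.r_eq_core h1, ← P.core_r _ f h2]
  full f' u h := by
    obtain ⟨e, he⟩ := P.exists_kind h
    exact ⟨e, P.core_inj _ _ e (P.exists_core_edge e).choose_spec.2 he⟩

/-- Given a full embedding of `F` in `E`, every hair extension of `F` is presented over `E`. -/
def hairPres {F E : FinGraph} (j : FullEmb F E) (m : F.V → ℕ) :
    HairPres (F.hairExtension m) E where
  root := Sum.elim j.v fun p => j.v p.1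
  height := Sum.elim (fun _ => 0) fun p => p.2.1 + 1
  kind := Sum.elim (fun f => some (j.e f)) fun _ => none
  core_s := by
    rintro (f | p) e h
    · cases h
      exact j.s_e f
    · cases h
  core_r := by
    rintro (f | p) e h
    · cases h
      exact j.r_e f
    · cases h
  core_height_s := by
    rintro (f | p) e h
    · rfl
    · cases h
  core_height_r := by
    rintro (f | p) e h
    · rfl
    · cases h
  core_inj := by
    rintro (f | p) (f' | p') e h h'
    · exact congrArg Sum.inl (j.e_inj (Option.some.inj (Eq.trans h h'.symm)))
    · cases h'
    · cases h
    · cases h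
  core_full := by
    rintro (u | p) e h hs
    · obtain ⟨f, rfl⟩ := j.full e u hs
      exact ⟨Sum.inl f, congrArg Sum.inl (j.v_inj ((j.s_e f).symm.trans hs)), rfl⟩
    · exact absurd h (Nat.succ_ne_zero _)
  hair_root := by
    rintro (f | p) h
    · cases h
    · simp only [FinGraph.hairExtension, Sum.elim_inr]
      split_ifs <;> rfl
  hair_height := by
    rintro (f | ⟨v, k, hk⟩) h
    · cases h
    · simp only [FinGraph.hairExtension, Sum.elim_inr]
      split_ifs with h0
      · subst h0
        rfl
      · change k + 1 = k - 1 + 1 + 1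
        omega
  hair_unique := by
    rintro (f | p) (f' | p') h hs
    · cases h
    · cases h
    · cases hs
    · exact congrArg Sum.inr (Sum.inr.inj hs)
  hair_full := by
    rintro (u | p) h
    · exact absurd rfl h
    · exact ⟨Sum.inr p, rfl, rfl⟩
  root_inj := by
    rintro (u | p) (u' | p') h h' hr
    · exact congrArg Sum.inl (j.v_inj hr)
    · exact absurd h' (Nat.succ_ne_zero _)
    · exact absurd h (Nat.succ_ne_zero _)
    · exact absurd h (Nat.succ_ne_zero _)

end FullEmb

/-- The tautological presentation of a hair extension of `F`. -/
def HairExt.ofHairExtension (F : FinGraph) (n : F.V → ℕ) : HairExt (F.hairExtension n) F where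
  toHairPres := (FullEmb.refl F).hairPres n
  core := Sum.inl
  height_core _ := rfl
  root_core _ := rfl

/-- A finite family `w` of elements of `V` in which every `v` occurs `m v > 0` times is indexed by the
vertices of the hair extension with strands of length `m v - 1`. -/
theorem exists_hair_index {V ι : Type} [DecidableEq V] [Fintype ι] (w : ι → V)
    (hw : Function.Surjective w) : ∃ m : V → ℕ, (∀ v, 0 < m v) ∧
      ∃ σ : (V ⊕ (Σ v : V, Fin (m v - 1))) ≃ ι, ∀ u, w (σ u) = Sum.elim id (fun p => p.1) u := by
  classical
  have hpos : ∀ v, 0 < Fintype.card {i // w i = v} := fun v =>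
    Fintype.card_pos_iff.2 ⟨⟨_, (hw v).choose_spec⟩⟩
  refine ⟨fun v => Fintype.card {i // w i = v}, hpos, ?_⟩
  have τ : ∀ v, (Unit ⊕ Fin (Fintype.card {i // w i = v} - 1)) ≃ {i // w i = v} := fun v =>
    Fintype.equivOfCardEq (by
      have := hpos v
      rw [Fintype.card_sum, Fintype.card_unit, Fintype.card_fin]
      omega)
  let ρ : (V ⊕ (Σ v : V, Fin (Fintype.card {i // w i = v} - 1))) ≃
      Σ v : V, (Unit ⊕ Fin (Fintype.card {i // w i = v} - 1)) :=
    { toFun := Sum.elim (fun v => ⟨v, Sum.inl ()⟩) (fun p => ⟨p.1, Sum.inr p.2⟩)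
      invFun := fun q => Sum.elim (fun _ => Sum.inl q.1) (fun k => Sum.inr ⟨q.1, k⟩) q.2
      left_inv := by rintro (v | p) <;> rfl
      right_inv := by rintro ⟨v, (_ | k)⟩ <;> rfl }
  refine ⟨(ρ.trans (Equiv.sigmaCongrRight τ)).trans (Equiv.sigmaFiberEquiv w), ?_⟩
  rintro (v | p)
  · exact (τ v (Sum.inl ())).2
  · exact (τ p.1 (Sum.inr p.2)).2

namespace LeavittPathAlgebra

variable {K : Type} [Field K]

/-- The endomorphism algebra of a standard module which involves exactly the vertices of a full
subgraph `F` is the Leavitt path algebra of a hair extension of `F`. -/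
theorem end_stdMod {F H : FinGraph} (j : FullEmb F H) {ι : Type} [Fintype ι] (w : ι → F.V)
    (hw : Function.Surjective w) {Q : Type} [AddCommGroup Q] [Module (LeavittPathAlgebra K H) Q]
    [Module K Q] [IsScalarTower K (LeavittPathAlgebra K H) Q]
    [SMulCommClass (LeavittPathAlgebra K H) K Q]
    (e : Q ≃ₗ[LeavittPathAlgebra K H] stdMod (K := K) fun i => j.v (w i)) :
    ∃ m : F.V → ℕ, (∀ v, 0 < m v) ∧ Nonempty (Module.End (LeavittPathAlgebra K H) Q ≃ₐ[K]
      LeavittPathAlgebra K (F.hairExtension m)) := by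
  obtain ⟨m, hm, σ, hσ⟩ := exists_hair_index w hw
  refine ⟨m, hm, ?_⟩
  obtain ⟨e₁⟩ := stdMod_reindex (K := K) (w := fun i => j.v (w i)) (w' := (j.hairPres m).root) σ
    (by
      rintro (u | p)
      · exact congrArg j.v (hσ (Sum.inl u))
      · exact congrArg j.v (hσ (Sum.inr p)))
  obtain ⟨e₂⟩ := end_hair K (j.hairPres m)
  exact ⟨(LinearEquiv.conjAlgEquiv K (e.trans e₁)).trans e₂⟩

end LeavittPathAlgebra

/-- The endomorphism ring of a nonzero finitely generated projective
module over `L_K(E)`, `E` a hair extension of a totally looped graph `F`, is the Leavitt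
path algebra of a hair extension of a restriction `F_T`; of a hair extension of `F`
itself when the module is a generator. -/
theorem hair_endomorphism_ring (K : Type) [Field K] (F : FinGraph)
    (hF : F.TotallyLooped) (n : F.V → ℕ) (hn : ∀ v, 0 < n v)
    (Q : Type) [AddCommGroup Q] [Module (LeavittPathAlgebra K (F.hairExtension n)) Q]
    [Module K Q] [IsScalarTower K (LeavittPathAlgebra K (F.hairExtension n)) Q]
    [SMulCommClass (LeavittPathAlgebra K (F.hairExtension n)) K Q]
    [Nontrivial Q] [Module.Finite (LeavittPathAlgebra K (F.hairExtension n)) Q]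
    [Module.Projective (LeavittPathAlgebra K (F.hairExtension n)) Q] :
    (∃ (T : Finset F.V) (hT : F.Hereditary T) (m : {v : F.V // v ∈ T} → ℕ),
        (∀ v, 0 < m v) ∧
        Nonempty (Module.End (LeavittPathAlgebra K (F.hairExtension n)) Q ≃ₐ[K]
          LeavittPathAlgebra K ((F.restrict T hT).hairExtension m))) ∧
    (IsGenerator (LeavittPathAlgebra K (F.hairExtension n)) Q →
      ∃ m : F.V → ℕ, (∀ v, 0 < m v) ∧
        Nonempty (Module.End (LeavittPathAlgebra K (F.hairExtension n)) Q ≃ₐ[K]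
          LeavittPathAlgebra K (F.hairExtension m))) := by
  let P := HairExt.ofHairExtension F n
  obtain ⟨ι₀, _, w₀, ⟨e₀⟩⟩ := LeavittPathAlgebra.exists_equiv_stdMod (K := K)
    (G := F.hairExtension n) Q
  obtain ⟨e₁⟩ := LeavittPathAlgebra.stdMod_equiv_core (K := K) P w₀
  obtain ⟨ι, _, w, hw, ⟨e₂⟩⟩ := LeavittPathAlgebra.exists_hereditary (K := K) P hF _ ι₀
    (fun i => P.root (w₀ i)) (Nat.lt_succ_self _)
  let e := (e₀.trans e₁).trans e₂
  constructor
  · refine ⟨Finset.univ.image w, ?_, ?_⟩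
    · intro f hf
      obtain ⟨i, -, hi⟩ := Finset.mem_image.1 hf
      obtain ⟨i', hi'⟩ := hw f i hi
      exact Finset.mem_image.2 ⟨i', Finset.mem_univ _, hi'⟩
    · exact LeavittPathAlgebra.end_stdMod
        ((FullEmb.ofHairExt P).comp (FullEmb.ofRestrict F (Finset.univ.image w) _))
        (fun i => ⟨w i, Finset.mem_image_of_mem w (Finset.mem_univ i)⟩)
        (by
          rintro ⟨v, hv⟩
          obtain ⟨i, -, hi⟩ := Finset.mem_image.1 hv
          exact ⟨i, Subtype.ext hi⟩) e
  · rintro ⟨k, f, hf⟩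
    refine LeavittPathAlgebra.end_stdMod (FullEmb.ofHairExt P) w ?_ e
    let g : (Fin k → Q) ≃ₗ[LeavittPathAlgebra K (F.hairExtension n)] (Fin k → _) :=
      LinearEquiv.piCongrRight fun _ => e
    exact LeavittPathAlgebra.generator_surjective P hF w hw (f ∘ₗ g.symm.toLinearMap)
      (hf.comp g.symm.surjective)
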